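/- The topological pair (𝒞(ℝ²), 𝒞(ℝ²) \ ℒ), where ℒ is the set of lattices, is homeomorphic to the suspension of the pair (𝒞¹, 𝒵¹), where 𝒞¹ is the set of closed subgroups of ℝ² of shortest nonzero vector of norm 1 and 𝒵¹ ⊂ 𝒞¹ is the subset of subgroups isomorphic to ℤ. -/

import Mathlib

open scoped Pointwise

noncomputable section

abbrev Euc (n : ℕ) := EuclideanSpace ℝ (Fin n)

/-- A point of the Chabauty space of ℝⁿ: a closed additive subgroup. -/
def ChabautyPoint (n : ℕ) : Type := {Γ : AddSubgroup (Euc n) // IsClosed (Γ : Set (Euc n))}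

/-- The Chabauty (Fell) topology on the space of closed subgroups of ℝⁿ. -/
instance chabautyTopology (n : ℕ) : TopologicalSpace (ChabautyPoint n) :=
  TopologicalSpace.generateFrom
    ({S | ∃ K : Set (Euc n), IsCompact K ∧
        S = {Γ : ChabautyPoint n | ((Γ.1 : Set (Euc n)) ∩ K) = ∅}} ∪
     {S | ∃ U : Set (Euc n), IsOpen U ∧
        S = {Γ : ChabautyPoint n | ((Γ.1 : Set (Euc n)) ∩ U).Nonempty}})

/-- A lattice in ℝ²: a discrete subgroup spanning ℝ² (equivalently, isomorphic to ℤ²). -/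
def IsLattice (Γ : AddSubgroup (Euc 2)) : Prop :=
  DiscreteTopology Γ ∧ Submodule.span ℝ (Γ : Set (Euc 2)) = ⊤

/-- Γ has covolume one: it is generated by two vectors with determinant ±1. -/
def UnitCovolume (Γ : AddSubgroup (Euc 2)) : Prop :=
  ∃ v w : Euc 2, AddSubgroup.closure {v, w} = Γ ∧ |v 0 * w 1 - v 1 * w 0| = 1

/-- 𝒞₁ : the closure of the set of unit-covolume lattices in the Chabauty space of ℝ². -/
def covolOne : Set (ChabautyPoint 2) :=
  closure {Γ : ChabautyPoint 2 | IsLattice Γ.1 ∧ UnitCovolume Γ.1}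

/-- 𝒞¹ : the set of closed subgroups of ℝ² whose shortest nonzero vector has norm 1. -/
def normOne : Set (ChabautyPoint 2) :=
  {Γ : ChabautyPoint 2 | ∃ x ∈ Γ.1, ‖x‖ = 1 ∧ ∀ y ∈ Γ.1, y ≠ 0 → 1 ≤ ‖y‖}

/-- Relation defining the suspension: collapse X × {0} and X × {1} each to a point. -/
def suspRel (X : Type*) (a b : X × Set.Icc (0 : ℝ) 1) : Prop :=
  a = b ∨ ((a.2 : ℝ) = 0 ∧ (b.2 : ℝ) = 0) ∨ ((a.2 : ℝ) = 1 ∧ (b.2 : ℝ) = 1)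

/-- The suspension of X. -/
def Susp (X : Type*) [TopologicalSpace X] : Type _ := Quot (suspRel X)

instance (X : Type*) [TopologicalSpace X] : TopologicalSpace (Susp X) :=
  instTopologicalSpaceQuot

/-- The suspension of a subset A ⊆ X, inside the suspension of X. -/
def suspSet {X : Type*} [TopologicalSpace X] (A : Set X) : Set (Susp X) :=
  {z : Susp X | ∃ x ∈ A, ∃ t : Set.Icc (0 : ℝ) 1, z = Quot.mk (suspRel X) (x, t)}

/-- ℒ : the set of lattices in the Chabauty space of ℝ². -/
def latticeSet : Set (ChabautyPoint 2) := {Γ : ChabautyPoint 2 | IsLattice Γ.1}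

/-- 𝒵¹ ⊆ 𝒞¹ : the subgroups of 𝒞¹ isomorphic to ℤ (rank one, i.e. not spanning ℝ²). -/
def rankOneNormOne : Set normOne :=
  {Γ : normOne | Submodule.span ℝ (Γ.1.1 : Set (Euc 2)) ≠ ⊤}

/-!
Every closed subgroup of the plane has successive minima `a ≤ b` in `[0, ∞]`, a direction `v` of a
shortest vector and a twist `s ∈ [-1/2, 1/2]`, exactly as in the reduction theory of binary
quadratic forms; here `a = 0` and `b = ∞` encode the subgroups which are not lattices. Conversely
the subgroup depends continuously on `(v, s, a, b)`, so that the Chabauty space is a quotient of a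
compact space. Which pairs `(v, s)` are identified over `(a, b)` depends only on whether `a < b`
and on whether `a = 0` or `b = ∞`.

The triangle of all `a ≤ b` is the union of the segments which join its two vertices `(0, 0)` and
`(∞, ∞)`, meeting only there. Each segment is labelled by `c ∈ [0, 1]`: `a = b` along the segment
`c = 0`, and `a = 0` or `b = ∞` along the segment `c = 1`. Hence the fibres of `(v, s)` over the
interior of a segment are all the same, and agree with the fibre over `(1, 1 + c)`, where `c` is
read in `[0, ∞]`; this is a group with shortest vector of norm one, which has rank one when
`c = ∞`. The two vertices are the full plane and the trivial group, the poles of the suspension.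
-/

open Set Filter Topology Module
open scoped ENNReal NNReal unitInterval

/-! ### Subgroups of the line -/

section ClosedSubgroupsOfReal

/-- `p` is the `n`-th multiple of the generator `g ∈ [0, ∞]`: the closed subgroup of `ℝ` with
generator `g` is all of `ℝ` for `g = 0` (no condition), `ℤ g` for `0 < g < ∞`, and trivial for
`g = ∞` (where `toReal` is `0`, so that only `n` has to be constrained). -/
def IsMultiple (g : ℝ≥0∞) (n : ℤ) (p : ℝ) : Prop :=
  g ≠ 0 → p = n * g.toReal ∧ (g = ⊤ → n = 0)

variable {g : ℝ≥0∞} {n n' : ℤ} {p p' : ℝ}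

lemma isMultiple_zero_left : IsMultiple 0 n p := fun h => absurd rfl h

lemma isMultiple_top_iff : IsMultiple ⊤ n p ↔ n = 0 ∧ p = 0 := by
  simp [IsMultiple, and_comm]

lemma isMultiple_iff (h₀ : g ≠ 0) (h : g ≠ ⊤) : IsMultiple g n p ↔ p = n * g.toReal := by
  simp [IsMultiple, h₀, h]

lemma isMultiple_zero (g : ℝ≥0∞) : IsMultiple g 0 0 := by simp [IsMultiple]

lemma IsMultiple.add (h : IsMultiple g n p) (h' : IsMultiple g n' p') :
    IsMultiple g (n + n') (p + p') := fun hg =>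
  ⟨by rw [(h hg).1, (h' hg).1]; push_cast; ring, fun ht => by rw [(h hg).2 ht, (h' hg).2 ht]; simp⟩

lemma IsMultiple.neg (h : IsMultiple g n p) : IsMultiple g (-n) (-p) := fun hg =>
  ⟨by rw [(h hg).1]; push_cast; ring, fun ht => by rw [(h hg).2 ht, neg_zero]⟩

lemma IsMultiple.eq_zero_of_enorm_lt (h : IsMultiple g n p) (hp : ‖p‖ₑ < g) : n = 0 ∧ p = 0 := by
  obtain ⟨rfl, ht⟩ := h (pos_of_gt hp).ne'
  rcases eq_or_ne g ⊤ with rfl | hg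
  · simp [ht rfl]
  suffices n = 0 by simp [this]
  by_contra hn
  refine hp.not_ge ?_
  have hn' : (1 : ℝ) ≤ |(n : ℝ)| := mod_cast Int.one_le_abs hn
  rw [Real.enorm_eq_ofReal_abs, ENNReal.le_ofReal_iff_toReal_le hg (abs_nonneg _), abs_mul,
    abs_of_nonneg ENNReal.toReal_nonneg]
  exact le_mul_of_one_le_left ENNReal.toReal_nonneg hn'

lemma isMultiple_mul_iff {r : ℝ≥0} (hr : r ≠ 0) :
    IsMultiple (r * g) n (r * p) ↔ IsMultiple g n p := by
  have hr' : (r : ℝ) ≠ 0 := NNReal.coe_ne_zero.2 hr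
  simp [IsMultiple, hr, ENNReal.mul_eq_top, mul_left_comm (n : ℝ) (r : ℝ), mul_right_inj' hr']

lemma exists_isMultiple_sub_mul_toReal_iff {k : ℤ} :
    (∃ m, IsMultiple g m (p - k * g.toReal)) ↔ ∃ m, IsMultiple g m p := by
  rcases eq_or_ne g ⊤ with rfl | hg
  · simp
  have hk (k : ℤ) : IsMultiple g k (k * g.toReal) := fun _ => ⟨rfl, fun h => absurd h hg⟩
  constructor
  · rintro ⟨m, hm⟩
    exact ⟨m + k, by simpa using hm.add (hk k)⟩
  · rintro ⟨m, hm⟩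
    exact ⟨m + -k, by simpa [sub_eq_add_neg] using hm.add (hk k).neg⟩

lemma exists_int_abs_sub_mul_le {c : ℝ} (hc : 0 < c) (r : ℝ) : ∃ n : ℤ, |r - n * c| ≤ c / 2 := by
  refine ⟨round (r / c), ?_⟩
  calc |r - round (r / c) * c| = |r / c - round (r / c)| * c := by
        rw [← abs_of_pos hc, ← abs_mul, abs_of_pos hc, sub_mul, div_mul_cancel₀ _ hc.ne']
    _ ≤ c / 2 := by linarith [mul_le_mul_of_nonneg_right (abs_sub_round (r / c)) hc.le]

lemma exists_isMultiple_abs_sub_le (hg : g ≠ ⊤) (r : ℝ) :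
    ∃ n p, IsMultiple g n p ∧ |p - r| ≤ g.toReal / 2 := by
  rcases eq_or_ne g 0 with rfl | h₀
  · exact ⟨0, r, isMultiple_zero_left, by simp⟩
  obtain ⟨n, hn⟩ := exists_int_abs_sub_mul_le (ENNReal.toReal_pos h₀ hg) r
  exact ⟨n, _, (isMultiple_iff h₀ hg).2 rfl, abs_sub_comm r _ ▸ hn⟩

variable {α : Type*} {l : Filter α} {G : α → ℝ≥0∞} {N : α → ℤ} {P : α → ℝ}

lemma IsMultiple.eventually_eq_zero_of_tendsto_top (hG : Tendsto G l (𝓝 ⊤))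
    (hP : Tendsto P l (𝓝 p)) (h : ∀ᶠ k in l, IsMultiple (G k) (N k) (P k)) :
    ∀ᶠ k in l, N k = 0 ∧ P k = 0 := by
  filter_upwards [hP.enorm.eventually_lt hG enorm_lt_top, h] with k hk hm
  exact hm.eq_zero_of_enorm_lt hk

lemma tendsto_mul_toReal (hg : g = ⊤ → n = 0) (hG : Tendsto G l (𝓝 g)) :
    Tendsto (fun k => (n : ℝ) * (G k).toReal) l (𝓝 (n * g.toReal)) := by
  rcases eq_or_ne g ⊤ with rfl | ht
  · simp [hg rfl, tendsto_const_nhds]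
  · exact ((ENNReal.tendsto_toReal ht).comp hG).const_mul _

lemma IsMultiple.exists_of_tendsto [l.NeBot] (hG : Tendsto G l (𝓝 g)) (hP : Tendsto P l (𝓝 p))
    (h : ∀ᶠ k in l, IsMultiple (G k) (N k) (P k)) :
    ∃ n, IsMultiple g n p ∧ (g ≠ 0 → ∀ᶠ k in l, N k = n) := by
  rcases eq_or_ne g 0 with rfl | h₀
  · exact ⟨0, isMultiple_zero_left, fun h => absurd rfl h⟩
  rcases eq_or_ne g ⊤ with rfl | ht
  · have hz := IsMultiple.eventually_eq_zero_of_tendsto_top hG hP h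
    refine ⟨0, isMultiple_top_iff.2 ⟨rfl, ?_⟩, fun _ => hz.mono fun _ => And.left⟩
    exact tendsto_nhds_unique (hP.congr' (hz.mono fun _ => And.right)) tendsto_const_nhds
  have hG' := (ENNReal.tendsto_toReal ht).comp hG
  have hN : Tendsto (fun k => (N k : ℝ)) l (𝓝 (p / g.toReal)) := by
    refine (hP.div hG' (ENNReal.toReal_pos h₀ ht).ne').congr' ?_
    filter_upwards [h, hG.eventually_ne h₀, hG.eventually_ne ht] with k hk hk₀ hkt
    exact (eq_div_of_mul_eq (ENNReal.toReal_pos hk₀ hkt).ne' (hk hk₀).1.symm).symm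
  obtain ⟨n, hn⟩ := Int.isClosedEmbedding_coe_real.isClosed_range.mem_of_tendsto hN
    (Eventually.of_forall fun k => mem_range_self (N k))
  rw [← hn] at hN
  refine ⟨n, (isMultiple_iff h₀ ht).2 ?_, fun _ => ?_⟩
  · exact (div_eq_iff (ENNReal.toReal_pos h₀ ht).ne').1 hn.symm
  · simpa using Int.isClosedEmbedding_coe_real.isEmbedding.tendsto_nhds_iff.2 hN

lemma IsMultiple.exists_tendsto {D : α → ℝ} {d : ℝ} (hG : Tendsto G l (𝓝 g))
    (hD : g ≠ 0 → Tendsto D l (𝓝 d)) (h : IsMultiple g n (p - d)) :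
    ∃ (N : α → ℤ) (P : α → ℝ), Tendsto P l (𝓝 p) ∧
      (∀ᶠ k in l, IsMultiple (G k) (N k) (P k - D k)) ∧ (g ≠ 0 → ∀ k, N k = n) := by
  rcases eq_or_ne g 0 with rfl | h₀
  · have hfin : ∀ᶠ k in l, G k ≠ ⊤ := hG.eventually_ne ENNReal.zero_ne_top
    have hnear : ∀ k, ∃ N P, G k ≠ ⊤ →
        IsMultiple (G k) N (P - D k) ∧ |P - p| ≤ (G k).toReal / 2 := fun k => by
      rcases eq_or_ne (G k) ⊤ with hk | hk
      · exact ⟨0, 0, fun h => absurd hk h⟩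
      · obtain ⟨N, P, hN, hP⟩ := exists_isMultiple_abs_sub_le hk (p - D k)
        refine ⟨N, P + D k, fun _ => ⟨by simpa using hN, ?_⟩⟩
        rwa [show P + D k - p = P - (p - D k) by ring]
    choose N P hNP using hnear
    refine ⟨N, P, ?_, hfin.mono fun k hk => (hNP k hk).1, fun h => absurd rfl h⟩
    refine tendsto_iff_norm_sub_tendsto_zero.2 (squeeze_zero' (.of_forall fun _ => norm_nonneg _)
      (hfin.mono fun k hk => (hNP k hk).2) ?_)
    simpa using ((ENNReal.tendsto_toReal ENNReal.zero_ne_top).comp hG).div_const 2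
  · obtain ⟨hp, ht⟩ := h h₀
    refine ⟨fun _ => n, fun k => n * (G k).toReal + D k, ?_, ?_, fun _ _ => rfl⟩
    · simpa [← hp] using (tendsto_mul_toReal ht hG).add (hD h₀)
    · have hk : ∀ᶠ k in l, G k = ⊤ → n = 0 := by
        rcases eq_or_ne g ⊤ with rfl | hg
        · exact .of_forall fun _ _ => ht rfl
        · exact (hG.eventually_ne hg).mono fun k hk h => absurd h hk
      exact hk.mono fun k hk _ => ⟨by ring, hk⟩

lemma exists_forall_mem_iff_isMultiple {H : AddSubgroup ℝ} (hH : IsClosed (H : Set ℝ)) :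
    ∃ g, ∀ p, p ∈ H ↔ ∃ n, IsMultiple g n p := by
  rcases H.dense_or_cyclic with hd | ⟨x, hx⟩
  · have huniv : (H : Set ℝ) = univ := hH.closure_eq ▸ hd.closure_eq
    exact ⟨0, fun p => iff_of_true (huniv ▸ mem_univ p : p ∈ (H : Set ℝ))
      ⟨0, isMultiple_zero_left⟩⟩
  rcases eq_or_ne x 0 with rfl | hx₀
  · exact ⟨⊤, fun p => by simp [hx, isMultiple_top_iff, AddSubgroup.mem_closure_singleton, eq_comm]⟩
  refine ⟨ENNReal.ofReal |x|, fun p => ?_⟩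
  have hx' : AddSubgroup.closure {|x|} = AddSubgroup.closure {x} := by
    rcases abs_choice x with h | h <;> simp [h, ← AddSubgroup.zmultiples_eq_closure]
  simp [hx, ← hx', isMultiple_iff, hx₀, AddSubgroup.mem_closure_singleton, eq_comm]

end ClosedSubgroupsOfReal

/-! ### Successive minima -/

section ShortestVectors

variable {E : Type*} [NormedAddCommGroup E]

/-- The first successive minimum of a subgroup: the infimum of the norms of its nonzero members,
which is `∞` for the trivial subgroup. -/
def firstMin (Γ : AddSubgroup E) : ℝ≥0∞ := ⨅ z ∈ Γ, ⨅ _ : z ≠ 0, ‖z‖ₑ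

lemma le_firstMin_iff {Γ : AddSubgroup E} {c : ℝ≥0∞} :
    c ≤ firstMin Γ ↔ ∀ z ∈ Γ, z ≠ 0 → c ≤ ‖z‖ₑ := by
  simp [firstMin]

lemma firstMin_lt_iff {Γ : AddSubgroup E} {c : ℝ≥0∞} :
    firstMin Γ < c ↔ ∃ z ∈ Γ, z ≠ 0 ∧ ‖z‖ₑ < c := by
  simp only [firstMin, iInf_lt_iff, exists_prop]

lemma discreteTopology_iff_firstMin_ne_zero {Γ : AddSubgroup E} :
    DiscreteTopology Γ ↔ firstMin Γ ≠ 0 := by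
  rw [← pos_iff_ne_zero]
  constructor
  · intro hΓ
    obtain ⟨ε, hε, h⟩ := Metric.isOpen_singleton_iff.1 (isOpen_discrete {(0 : Γ)})
    refine (ENNReal.ofReal_pos.2 hε).trans_le (le_firstMin_iff.2 fun z hz hz₀ => ?_)
    rw [← ofReal_norm]
    refine ENNReal.ofReal_le_ofReal (le_of_not_gt fun hlt => hz₀ ?_)
    exact congrArg Subtype.val (h ⟨z, hz⟩ (by simpa [Subtype.dist_eq] using hlt))
  · intro h
    obtain ⟨ε, hε, hεΓ⟩ := ENNReal.lt_iff_exists_nnreal_btwn.1 h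
    refine .of_forall_le_dist (NNReal.coe_pos.2 (ENNReal.coe_pos.1 hε)) fun z z' hne => ?_
    have hmin := le_firstMin_iff.1 hεΓ.le _ (z - z').2 (by simpa [sub_eq_zero] using hne)
    simpa [Subtype.dist_eq, dist_eq_norm, enorm, ← NNReal.coe_le_coe] using hmin

lemma exists_mem_forall_norm_le [ProperSpace E] (Γ : AddSubgroup E) [DiscreteTopology Γ]
    {p : E → Prop} (h : ∃ z ∈ Γ, p z) : ∃ u ∈ Γ, p u ∧ ∀ z ∈ Γ, p z → ‖u‖ ≤ ‖z‖ := by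
  obtain ⟨z, hz, hp⟩ := h
  obtain ⟨u, hu, hmin⟩ := ((tendsto_norm_cocompact_atTop (E := E)).comp
    (Γ.tendsto_coe_cofinite_of_discrete ⟨‹_›⟩)).exists_within_forall_le
      (s := {z : Γ | p z}) ⟨⟨z, hz⟩, hp⟩
  exact ⟨u, u.2, hu, fun z hz hp => hmin ⟨z, hz⟩ hp⟩

lemma firstMin_eq_one_iff [ProperSpace E] {Γ : AddSubgroup E} :
    firstMin Γ = 1 ↔ ∃ x ∈ Γ, ‖x‖ = 1 ∧ ∀ y ∈ Γ, y ≠ 0 → 1 ≤ ‖y‖ := by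
  have hone {y : E} : 1 ≤ ‖y‖ₑ ↔ 1 ≤ ‖y‖ := by simp [← ofReal_norm]
  constructor
  · intro h
    have hdisc : DiscreteTopology Γ := discreteTopology_iff_firstMin_ne_zero.2 (by simp [h])
    obtain ⟨z, hz, hz₀, -⟩ := firstMin_lt_iff.1 (h ▸ ENNReal.one_lt_top)
    obtain ⟨u, hu, hu₀, hmin⟩ := exists_mem_forall_norm_le Γ (p := (· ≠ 0)) ⟨z, hz, hz₀⟩
    have hle : ∀ y ∈ Γ, y ≠ 0 → 1 ≤ ‖y‖ := fun y hy hy₀ => hone.1 (le_firstMin_iff.1 h.ge y hy hy₀)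
    refine ⟨u, hu, le_antisymm (le_of_not_gt fun hlt => ?_) (hle u hu hu₀), hle⟩
    refine h.not_gt (lt_of_lt_of_le ?_ (le_firstMin_iff.2 fun y hy hy₀ =>
      enorm_le_iff_norm_le.2 (hmin y hy hy₀)))
    simpa [← ofReal_norm] using hlt
  · rintro ⟨x, hx, hx₁, hle⟩
    refine le_antisymm (le_of_forall_gt fun r hr => firstMin_lt_iff.2 ⟨x, hx, ?_, ?_⟩)
      (le_firstMin_iff.2 fun y hy hy₀ => hone.2 (hle y hy hy₀))
    · exact norm_ne_zero_iff.1 (by simp [hx₁])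
    · simpa [← ofReal_norm, hx₁] using hr

lemma exists_norm_eq_one_forall_smul_mem [NormedSpace ℝ E] [ProperSpace E] {Γ : AddSubgroup E}
    (hΓ : IsClosed (Γ : Set E)) (h : firstMin Γ = 0) : ∃ v : E, ‖v‖ = 1 ∧ ∀ r : ℝ, r • v ∈ Γ := by
  have hshort : ∀ k : ℕ, ∃ z ∈ Γ, z ≠ 0 ∧ ‖z‖ₑ < ((k : ℝ≥0∞) + 1)⁻¹ := fun k =>
    firstMin_lt_iff.1 (h ▸ ENNReal.inv_pos.2 (by finiteness))
  choose z hzΓ hz₀ hz using hshort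
  have hz_lim : Tendsto (fun k => ‖z k‖ₑ) atTop (𝓝 0) :=
    tendsto_of_tendsto_of_tendsto_of_le_of_le tendsto_const_nhds
      (by simpa using (tendsto_add_atTop_iff_nat 1).2 ENNReal.tendsto_inv_nat_nhds_zero)
      (fun _ => zero_le) (fun k => (hz k).le)
  obtain ⟨v, hv, φ, hφ, hv_lim⟩ := (isCompact_sphere (0 : E) 1).tendsto_subseq
    (x := fun k => ‖z k‖⁻¹ • z k) fun k => by simp [norm_smul, hz₀ k]
  refine ⟨v, mem_sphere_zero_iff_norm.1 hv, fun r => ?_⟩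
  choose n p hnp hpr using fun k => exists_isMultiple_abs_sub_le (enorm_ne_top (x := z k)) r
  have hp_lim : Tendsto p atTop (𝓝 r) := by
    refine tendsto_iff_norm_sub_tendsto_zero.2 (squeeze_zero (fun _ => norm_nonneg _) hpr ?_)
    simpa using ((ENNReal.tendsto_toReal ENNReal.zero_ne_top).comp hz_lim).div_const 2
  refine hΓ.mem_of_tendsto ((hp_lim.comp hφ.tendsto_atTop).smul hv_lim) (.of_forall fun k => ?_)
  have hp := (hnp (φ k) (by simpa using hz₀ (φ k))).1
  rw [toReal_enorm] at hp
  simp only [Function.comp_apply, SetLike.mem_coe, hp, smul_smul]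
  rw [mul_assoc, mul_inv_cancel₀ (norm_ne_zero_iff.2 (hz₀ _)), mul_one, Int.cast_smul_eq_zsmul]
  exact Γ.zsmul_mem (hzΓ _) _

end ShortestVectors

section Height

/-- The distance of the second vector of a reduced basis from the line through the first, where
`a ≤ b` are the lengths of the two vectors and `s * a` is the coordinate of the second vector along
the first. -/
def height (s : ℝ) (a b : ℝ≥0∞) : ℝ≥0∞ :=
  if b = ⊤ then ⊤ else ENNReal.ofReal √(b.toReal ^ 2 - (s * a.toReal) ^ 2)

variable {s : ℝ} {a b : ℝ≥0∞}

@[simp] lemma height_top : height s a ⊤ = ⊤ := if_pos rfl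

lemma eq_zero_of_isMultiple_height {n : ℤ} {p : ℝ} (hab : a ≤ b)
    (h : IsMultiple (height s a b) n p) (ha : a = ⊤) : n = 0 := by
  obtain rfl : b = ⊤ := top_le_iff.1 (ha ▸ hab)
  exact (isMultiple_top_iff.1 (height_top ▸ h)).1

lemma height_of_ne_top (hb : b ≠ ⊤) :
    height s a b = ENNReal.ofReal √(b.toReal ^ 2 - (s * a.toReal) ^ 2) := if_neg hb

lemma height_ne_top (hb : b ≠ ⊤) : height s a b ≠ ⊤ := by simp [height_of_ne_top hb]

@[simp] lemma height_zero : height s 0 b = b := by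
  rcases eq_or_ne b ⊤ with rfl | hb
  · simp
  · simp [height_of_ne_top hb, hb]

lemma height_mul (r : ℝ≥0) (hr : r ≠ 0) : height s (r * a) (r * b) = r * height s a b := by
  rcases eq_or_ne b ⊤ with rfl | hb
  · simp [hr]
  rw [height_of_ne_top hb, height_of_ne_top (by finiteness), ← ENNReal.ofReal_coe_nnreal,
    ← ENNReal.ofReal_mul r.coe_nonneg]
  conv_rhs => rw [← Real.sqrt_sq r.coe_nonneg, ← Real.sqrt_mul (sq_nonneg _)]
  simp only [ENNReal.toReal_mul, ENNReal.ofReal_coe_nnreal, ENNReal.coe_toReal]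
  ring_nf

lemma toReal_height_sq (hs : |s| ≤ 1 / 2) (hab : a ≤ b) (hb : b ≠ ⊤) :
    (height s a b).toReal ^ 2 = b.toReal ^ 2 - (s * a.toReal) ^ 2 := by
  have h : |s * a.toReal| ≤ 1 * b.toReal := by
    rw [abs_mul, abs_of_nonneg ENNReal.toReal_nonneg]
    exact mul_le_mul (hs.trans (by norm_num)) (ENNReal.toReal_mono hb hab) ENNReal.toReal_nonneg
      zero_le_one
  rw [one_mul, ← abs_of_nonneg (ENNReal.toReal_nonneg (a := b))] at h
  rw [height_of_ne_top hb, ENNReal.toReal_ofReal (Real.sqrt_nonneg _),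
    Real.sq_sqrt (sub_nonneg.2 (sq_le_sq.2 h))]

lemma three_mul_sq_le_sq_two_mul_height (hs : |s| ≤ 1 / 2) (hab : a ≤ b) (hb : b ≠ ⊤) :
    3 * b.toReal ^ 2 ≤ (2 * (height s a b).toReal) ^ 2 := by
  have hs' : s ^ 2 ≤ (1 / 2) ^ 2 := sq_le_sq.2 (by rwa [abs_of_pos (one_half_pos (α := ℝ))])
  have ha : a.toReal ^ 2 ≤ b.toReal ^ 2 := by gcongr
  rw [mul_pow, toReal_height_sq hs hab hb, mul_pow]
  linarith [mul_le_mul hs' ha (sq_nonneg _) (by norm_num)]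

lemma le_two_mul_height (hs : |s| ≤ 1 / 2) (hab : a ≤ b) : b ≤ 2 * height s a b := by
  rcases eq_or_ne b ⊤ with rfl | hb
  · simp
  have h : b.toReal ≤ 2 * (height s a b).toReal :=
    le_of_sq_le_sq (by linarith [three_mul_sq_le_sq_two_mul_height hs hab hb, sq_nonneg b.toReal])
      (by positivity)
  rw [← ENNReal.toReal_le_toReal hb (ENNReal.mul_ne_top (by simp) (height_ne_top hb))]
  simpa using h

lemma height_ne_zero (hs : |s| ≤ 1 / 2) (hab : a ≤ b) (hb : b ≠ 0) : height s a b ≠ 0 := by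
  rintro h
  exact hb (by simpa [h] using le_two_mul_height hs hab)

lemma continuous_height {X : Type*} [TopologicalSpace X] {s : X → ℝ} {a b : X → ℝ≥0∞}
    (hs : Continuous s) (ha : Continuous a) (hb : Continuous b) (hs' : ∀ x, |s x| ≤ 1 / 2)
    (hab : ∀ x, a x ≤ b x) : Continuous fun x => height (s x) (a x) (b x) := by
  refine continuous_iff_continuousAt.2 fun x₀ => ?_
  rcases eq_or_ne (b x₀) ⊤ with htop | hfin
  · have hhalf : Tendsto (fun x => b x / 2) (𝓝 x₀) (𝓝 ⊤) := by
      simpa [htop, ENNReal.top_div] using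
        ENNReal.Tendsto.div_const (hb.tendsto x₀) (.inr two_ne_zero)
    simp only [ContinuousAt, htop, height_top]
    refine tendsto_of_tendsto_of_tendsto_of_le_of_le hhalf tendsto_const_nhds (fun x => ?_)
      fun x => le_top
    exact ENNReal.div_le_of_le_mul' (le_two_mul_height (hs' x) (hab x))
  · have ha' := (ENNReal.tendsto_toReal (ne_top_of_le_ne_top hfin (hab x₀))).comp (ha.tendsto x₀)
    have hb' := (ENNReal.tendsto_toReal hfin).comp (hb.tendsto x₀)
    have h := ENNReal.tendsto_ofReal ((hb'.pow 2).sub (((hs.tendsto x₀).mul ha').pow 2)).sqrt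
    simp only [ContinuousAt, height_of_ne_top hfin]
    refine h.congr' ?_
    filter_upwards [(hb.tendsto x₀).eventually_ne hfin] with x hx
    simp [height_of_ne_top hx]

/-- The right-hand side is the squared norm of `m • u + n • w`, where `u` and `w` have lengths
`a ≤ b` and the component of `w` along `u` is `s * a`. -/
lemma sq_le_reduced_form {s a b : ℝ} {n : ℤ} (m : ℤ) (hs : |s| ≤ 1 / 2) (ha : 0 ≤ a) (hab : a ≤ b)
    (hn : n ≠ 0) : b ^ 2 ≤ ((m + n * s) * a) ^ 2 + n ^ 2 * (b ^ 2 - (s * a) ^ 2) := by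
  have hform : (1 : ℝ) ≤ |(m : ℝ)| ^ 2 - |(m : ℝ)| * |(n : ℝ)| + |(n : ℝ)| ^ 2 := by
    have h : 1 ≤ |m| ^ 2 - |m| * |n| + |n| ^ 2 := by
      have hn' := Int.one_le_abs hn
      nlinarith [sq_nonneg (|m| - |n|), abs_nonneg m, sq_nonneg (|m|)]
    exact_mod_cast h
  have hcross : -(|(m : ℝ)| * |(n : ℝ)|) ≤ 2 * (m * n * s) := by
    have h : |(m : ℝ) * n * s| ≤ |(m : ℝ)| * |(n : ℝ)| * (1 / 2) := by
      rw [abs_mul, abs_mul]; gcongr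
    linarith [neg_abs_le ((m : ℝ) * n * s)]
  have hsq : a ^ 2 ≤ b ^ 2 := by gcongr
  rw [sq_abs, sq_abs] at hform
  rw [show ((m + n * s) * a) ^ 2 + n ^ 2 * (b ^ 2 - (s * a) ^ 2) =
    (m ^ 2 + 2 * (m * n * s)) * a ^ 2 + n ^ 2 * b ^ 2 by ring]
  have hlower := mul_le_mul_of_nonneg_right (add_le_add_right hcross ((m : ℝ) ^ 2)) (sq_nonneg a)
  rcases le_total 0 ((m : ℝ) ^ 2 - |(m : ℝ)| * |(n : ℝ)|) with hc | hc
  · have hn' : (1 : ℝ) ≤ n ^ 2 := mod_cast (one_le_sq_iff_one_le_abs n).2 (Int.one_le_abs hn)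
    nlinarith [mul_nonneg hc (sq_nonneg a), mul_le_mul_of_nonneg_right hn' (sq_nonneg b)]
  · nlinarith [mul_nonneg (neg_nonneg.2 hc) (sub_nonneg.2 hsq), sq_nonneg b]

end Height

section Plane

open scoped RealInnerProductSpace

variable {E : Type*} [NormedAddCommGroup E] [InnerProductSpace ℝ E] [Fact (finrank ℝ E = 2)]
  (o : Orientation ℝ E (Fin 2))

section OrientedPlane

variable {v z z' : E}

lemma inner_smul_add_areaForm_smul (hv : ‖v‖ = 1) (z : E) :
    ⟪v, z⟫ • v + o.areaForm v z • o.rightAngleRotation v = z := by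
  refine ext_inner_right ℝ fun y => ?_
  simpa [inner_add_left, real_inner_smul_left, hv] using
    o.inner_mul_inner_add_areaForm_mul_areaForm v z y

lemma inner_smul_add_smul_rightAngleRotation (hv : ‖v‖ = 1) (p q : ℝ) :
    ⟪v, p • v + q • o.rightAngleRotation v⟫ = p := by
  simp [inner_add_right, real_inner_smul_right, hv]

lemma areaForm_smul_add_smul_rightAngleRotation (hv : ‖v‖ = 1) (p q : ℝ) :
    o.areaForm v (p • v + q • o.rightAngleRotation v) = q := by
  simp [hv]

lemma norm_sq_eq_inner_sq_add_areaForm_sq (hv : ‖v‖ = 1) (z : E) :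
    ‖z‖ ^ 2 = ⟪v, z⟫ ^ 2 + o.areaForm v z ^ 2 := by
  simpa [hv] using (o.inner_sq_add_areaForm_sq v z).symm

lemma eq_of_inner_eq_of_areaForm_eq (hv : ‖v‖ = 1) (hi : ⟪v, z⟫ = ⟪v, z'⟫)
    (ha : o.areaForm v z = o.areaForm v z') : z = z' := by
  rw [← inner_smul_add_areaForm_smul o hv z, hi, ha, inner_smul_add_areaForm_smul o hv z']

lemma eq_or_eq_neg_of_areaForm_eq_zero (hv : ‖v‖ = 1) (hz : ‖z‖ = 1) (h : o.areaForm v z = 0) :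
    z = v ∨ z = -v := by
  have hsq : ⟪v, z⟫ ^ 2 = 1 := by
    simpa [h, hz] using (norm_sq_eq_inner_sq_add_areaForm_sq o hv z).symm
  have hzv := inner_smul_add_areaForm_smul o hv z
  rw [h, zero_smul, add_zero] at hzv
  rcases mul_self_eq_one_iff.1 (sq ⟪v, z⟫ ▸ hsq) with h1 | h1 <;> simp_all

lemma span_eq_top_of_areaForm_ne_zero {s : Set E} (hz : z ∈ s) (hz' : z' ∈ s)
    (h : o.areaForm z z' ≠ 0) : Submodule.span ℝ s = ⊤ := by
  have hli : LinearIndependent ℝ ![z, z'] := by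
    refine LinearIndependent.pair_iff.2 fun c d hcd => ⟨?_, ?_⟩
    · simpa [h] using congrArg (fun y => o.areaForm y z') hcd
    · simpa [h] using congrArg (o.areaForm z) hcd
  refine top_le_iff.1 ?_
  rw [← hli.span_eq_top_of_card_eq_finrank (by simp [(Fact.out : finrank ℝ E = 2)])]
  exact Submodule.span_mono (by simp [Set.insert_subset_iff, hz, hz'])

end OrientedPlane

/-- The second successive minimum of a subgroup of an oriented plane: the infimum of the lengths
of the longer vectors of its linearly independent pairs, which is `∞` if it is contained in a
line. -/
def secondMin (Γ : AddSubgroup E) : ℝ≥0∞ :=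
  ⨅ z ∈ Γ, ⨅ z' ∈ Γ, ⨅ _ : o.areaForm z z' ≠ 0, ‖z‖ₑ ⊔ ‖z'‖ₑ

section SecondMin

variable {o} {Γ : AddSubgroup E} {c : ℝ≥0∞}

lemma le_secondMin_iff :
    c ≤ secondMin o Γ ↔ ∀ z ∈ Γ, ∀ z' ∈ Γ, o.areaForm z z' ≠ 0 → c ≤ ‖z‖ₑ ⊔ ‖z'‖ₑ := by
  simp only [secondMin, le_iInf_iff]

lemma secondMin_lt_iff :
    secondMin o Γ < c ↔ ∃ z ∈ Γ, ∃ z' ∈ Γ, o.areaForm z z' ≠ 0 ∧ ‖z‖ₑ ⊔ ‖z'‖ₑ < c := by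
  simp only [secondMin, iInf_lt_iff, exists_prop]

lemma span_eq_top_iff_secondMin_ne_top :
    Submodule.span ℝ (Γ : Set E) = ⊤ ↔ secondMin o Γ ≠ ⊤ := by
  rw [← lt_top_iff_ne_top, secondMin_lt_iff]
  constructor
  · intro hspan
    by_contra! hline
    have hker : ∀ z ∈ Γ, o.areaForm z = 0 := fun z hz => by
      have hle : Submodule.span ℝ (Γ : Set E) ≤ (o.areaForm z).ker :=
        Submodule.span_le.2 fun z' hz' => by
          by_contra hne
          exact (hline z hz z' hz' hne).not_gt (max_lt enorm_lt_top enorm_lt_top)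
      exact LinearMap.ker_eq_top.1 (top_le_iff.1 (hspan ▸ hle))
    have hbot : Submodule.span ℝ (Γ : Set E) ≤ ⊥ := Submodule.span_le.2 fun z hz => by
      simpa using congrArg (fun f => f (o.rightAngleRotation z)) (hker z hz)
    have : Nontrivial E :=
      nontrivial_of_finrank_pos (R := ℝ) (by simp [Fact.out (p := finrank ℝ E = 2)])
    exact bot_ne_top (le_bot_iff.1 hbot ▸ hspan)
  · rintro ⟨z, hz, z', hz', h, -⟩
    exact span_eq_top_of_areaForm_ne_zero o hz hz' h

end SecondMin

/-! ### Plane groups with reduced parameters -/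

/-- The subgroup with parameters `v, s, a, b`. When these are reduced and `0 < a`, `b < ∞`, it is
the lattice generated by the vector of length `a` along `v` and a vector of length `b` whose
component along `v` is `s * a`. If `a = 0` the first generator is replaced by the line `ℝ v`, if
`b = ∞` the second generator is missing, and so on. -/
def planeGroup (v : E) (s : ℝ) (a b : ℝ≥0∞) : AddSubgroup E where
  carrier := {z | ∃ n m : ℤ, IsMultiple (height s a b) n (o.areaForm v z) ∧
    IsMultiple a m (⟪v, z⟫ - n * (s * a.toReal))}
  zero_mem' := ⟨0, 0, by simp [isMultiple_zero], by simp [isMultiple_zero]⟩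
  add_mem' := by
    rintro z z' ⟨n, m, hn, hm⟩ ⟨n', m', hn', hm'⟩
    refine ⟨n + n', m + m', by simpa using hn.add hn', ?_⟩
    convert hm.add hm' using 1
    rw [inner_add_right]
    push_cast
    ring
  neg_mem' := by
    rintro z ⟨n, m, hn, hm⟩
    refine ⟨-n, -m, by simpa using hn.neg, ?_⟩
    convert hm.neg using 1
    rw [inner_neg_right]
    push_cast
    ring

/-- The normalization of the parameters of `planeGroup` under which `a` and `b` are the successive
minima; compare the reduction of positive definite binary quadratic forms. -/
structure IsReducedParam (v : E) (s : ℝ) (a b : ℝ≥0∞) : Prop where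
  norm_eq : ‖v‖ = 1
  abs_le : |s| ≤ 1 / 2
  le : a ≤ b

section PlaneGroup

variable {o} {v v' z : E} {s s' : ℝ} {a a' b b' r : ℝ≥0∞}

lemma mem_planeGroup : z ∈ planeGroup o v s a b ↔ ∃ n m : ℤ,
    IsMultiple (height s a b) n (o.areaForm v z) ∧
      IsMultiple a m (⟪v, z⟫ - n * (s * a.toReal)) := Iff.rfl

lemma smul_add_smul_mem_planeGroup (hv : ‖v‖ = 1) {n m : ℤ} {p q : ℝ}
    (hn : IsMultiple (height s a b) n q) (hm : IsMultiple a m (p - n * (s * a.toReal))) :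
    p • v + q • o.rightAngleRotation v ∈ planeGroup o v s a b := by
  refine ⟨n, m, ?_, ?_⟩
  · rwa [areaForm_smul_add_smul_rightAngleRotation o hv]
  · rwa [inner_smul_add_smul_rightAngleRotation o hv]

lemma planeGroup_neg (v : E) (s : ℝ) (a b : ℝ≥0∞) :
    planeGroup o (-v) s a b = planeGroup o v s a b := by
  have hle : ∀ v : E, planeGroup o v s a b ≤ planeGroup o (-v) s a b := by
    rintro v z ⟨n, m, hn, hm⟩
    refine ⟨-n, -m, by simpa using hn.neg, ?_⟩
    convert hm.neg using 1
    rw [inner_neg_left]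
    push_cast
    ring
  exact (by simpa using hle (-v) : planeGroup o (-v) s a b ≤ _).antisymm (hle v)

lemma planeGroup_zero_left (v : E) (s s' : ℝ) (b : ℝ≥0∞) :
    planeGroup o v s 0 b = planeGroup o v s' 0 b := by
  ext z
  simp [mem_planeGroup, isMultiple_zero_left]

lemma planeGroup_top_right (v : E) (s s' : ℝ) (a : ℝ≥0∞) :
    planeGroup o v s a ⊤ = planeGroup o v s' a ⊤ := by
  ext z
  simp [mem_planeGroup, isMultiple_top_iff]

lemma planeGroup_add_intCast (hs : |s| ≤ 1 / 2) (m : ℤ) (hs' : |m + s| ≤ 1 / 2) :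
    planeGroup o v (m + s) a b = planeGroup o v s a b := by
  have hsq : (m + s) ^ 2 = s ^ 2 := by
    have hm : |(m : ℝ)| ≤ 1 := by
      calc |(m : ℝ)| = |(m + s) - s| := by rw [add_sub_cancel_right]
        _ ≤ |m + s| + |s| := abs_sub _ _
        _ ≤ 1 := by linarith
    rw [abs_le] at hs hs'
    obtain ⟨hm₁, hm₂⟩ : -1 ≤ m ∧ m ≤ 1 := abs_le.1 (mod_cast hm)
    interval_cases m <;> push_cast at hs' ⊢ <;> nlinarith
  have hheight : height (m + s) a b = height s a b := by
    simp only [height, mul_pow, hsq]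
  ext z
  simp only [mem_planeGroup, hheight, exists_and_left]
  refine exists_congr fun n => and_congr_right fun _ => ?_
  rw [← exists_isMultiple_sub_mul_toReal_iff (k := n * m) (p := ⟪v, z⟫ - n * (s * a.toReal))]
  push_cast
  ring_nf

lemma planeGroup_zero_zero : planeGroup o v s 0 0 = ⊤ :=
  top_le_iff.1 fun _ _ => ⟨0, 0, by simp [isMultiple_zero_left], isMultiple_zero_left⟩

lemma planeGroup_top_top (hv : ‖v‖ = 1) : planeGroup o v s ⊤ ⊤ = ⊥ := by
  refine (AddSubgroup.eq_bot_iff_forall _).2 ?_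
  rintro z ⟨n, m, hn, hm⟩
  rw [height_top, isMultiple_top_iff] at hn
  obtain ⟨rfl, hω⟩ := hn
  refine eq_of_inner_eq_of_areaForm_eq o hv ?_ (by simpa using hω)
  simpa using (isMultiple_top_iff.1 hm).2

lemma planeGroup_smul {r : ℝ≥0} (hr : r ≠ 0) (v : E) (s : ℝ) (a b : ℝ≥0∞) :
    planeGroup o v s (r * a) (r * b) = (r : ℝ) • planeGroup o v s a b := by
  ext z
  obtain ⟨z, rfl⟩ := (MulAction.bijective₀ (NNReal.coe_ne_zero.2 hr)).surjective z
  rw [AddSubgroup.smul_mem_pointwise_smul_iff₀ (NNReal.coe_ne_zero.2 hr), mem_planeGroup,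
    mem_planeGroup]
  refine exists_congr fun n => exists_congr fun m => and_congr ?_ ?_
  · rw [height_mul r hr, map_smul, smul_eq_mul, isMultiple_mul_iff hr]
  · rw [real_inner_smul_right, ← isMultiple_mul_iff hr (g := a)]
    simp only [ENNReal.toReal_mul, ENNReal.coe_toReal]
    ring_nf

lemma IsReducedParam.le_enorm_of_areaForm_ne_zero (h : IsReducedParam v s a b)
    (hz : z ∈ planeGroup o v s a b) (hω : o.areaForm v z ≠ 0) : b ≤ ‖z‖ₑ := by
  obtain ⟨n, m, hn, hm⟩ := hz
  rcases eq_or_ne b 0 with rfl | hb₀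
  · exact zero_le
  rcases eq_or_ne b ⊤ with rfl | hb
  · exact absurd (isMultiple_top_iff.1 (height_top ▸ hn)).2 hω
  rw [isMultiple_iff (height_ne_zero h.abs_le h.le hb₀) (height_ne_top hb)] at hn
  have hn₀ : n ≠ 0 := by rintro rfl; simp [hω] at hn
  have hinner : ((m + n * s) * a.toReal) ^ 2 ≤ ⟪v, z⟫ ^ 2 := by
    rcases eq_or_ne a 0 with rfl | ha
    · simpa using sq_nonneg _
    · rw [isMultiple_iff ha (ne_top_of_le_ne_top hb h.le)] at hm
      rw [sub_eq_iff_eq_add.1 hm]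
      exact (by ring : _ = _).le
  rw [← ENNReal.ofReal_toReal hb, ← ofReal_norm]
  refine ENNReal.ofReal_le_ofReal (le_of_sq_le_sq ?_ (norm_nonneg z))
  calc b.toReal ^ 2
      ≤ ((m + n * s) * a.toReal) ^ 2 + n ^ 2 * (b.toReal ^ 2 - (s * a.toReal) ^ 2) :=
        sq_le_reduced_form m h.abs_le ENNReal.toReal_nonneg (ENNReal.toReal_mono hb h.le) hn₀
    _ ≤ ⟪v, z⟫ ^ 2 + o.areaForm v z ^ 2 := by
        rw [hn, mul_pow (n : ℝ), toReal_height_sq h.abs_le h.le hb]; gcongr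
    _ = ‖z‖ ^ 2 := (norm_sq_eq_inner_sq_add_areaForm_sq o h.norm_eq z).symm

lemma IsReducedParam.le_enorm (h : IsReducedParam v s a b) (hz : z ∈ planeGroup o v s a b)
    (hz₀ : z ≠ 0) : a ≤ ‖z‖ₑ := by
  by_cases hω : o.areaForm v z = 0
  · by_contra! hlt
    obtain ⟨n, m, hn, hm⟩ := hz
    obtain ⟨rfl, -⟩ := hn.eq_zero_of_enorm_lt (by
      simpa [hω, pos_iff_ne_zero] using
        height_ne_zero h.abs_le h.le ((pos_of_gt hlt).trans_le h.le).ne')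
    have hle : ‖⟪v, z⟫‖ₑ ≤ ‖z‖ₑ := by
      simpa [h.norm_eq, enorm_le_iff_norm_le] using norm_inner_le_norm (𝕜 := ℝ) v z
    rw [Int.cast_zero, zero_mul, sub_zero] at hm
    have hi := (hm.eq_zero_of_enorm_lt (hle.trans_lt hlt)).2
    exact hz₀ (eq_of_inner_eq_of_areaForm_eq o h.norm_eq (by simpa using hi) (by simpa using hω))
  · exact h.le.trans (h.le_enorm_of_areaForm_ne_zero hz hω)

lemma exists_smul_mem_planeGroup (hv : ‖v‖ = 1) (har : a < r) :
    ∃ p : ℝ, p ≠ 0 ∧ p • v ∈ planeGroup o v s a b ∧ ‖p • v‖ₑ < r := by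
  obtain ⟨p, m, hp₀, hm, hpr⟩ : ∃ (p : ℝ≥0) (m : ℤ), p ≠ 0 ∧ IsMultiple a m p ∧ p < r := by
    rcases eq_or_ne a 0 with rfl | ha
    · obtain ⟨p, hp, hpr⟩ := ENNReal.lt_iff_exists_nnreal_btwn.1 har
      exact ⟨p, 0, by simpa [pos_iff_ne_zero] using hp, isMultiple_zero_left, hpr⟩
    · lift a to ℝ≥0 using har.ne_top
      exact ⟨a, 1, by simpa using ha, by simp [isMultiple_iff ha], har⟩
  refine ⟨p, by simpa using hp₀, ?_, ?_⟩
  · simpa using smul_add_smul_mem_planeGroup (o := o) (b := b) (s := s) hv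
      (isMultiple_zero _) (by simpa using hm)
  · simpa [enorm_smul, show ‖v‖ₑ = 1 by simp [← ofReal_norm, hv]] using hpr

lemma second_mem_planeGroup (hv : ‖v‖ = 1) (hb : b ≠ ⊤) :
    (s * a.toReal) • v + (height s a b).toReal • o.rightAngleRotation v ∈ planeGroup o v s a b :=
  smul_add_smul_mem_planeGroup hv (n := 1) (m := 0)
    (fun _ => ⟨by simp, fun h => absurd h (height_ne_top hb)⟩) (by simp [isMultiple_zero])

lemma IsReducedParam.exists_areaForm_ne_zero (h : IsReducedParam v s a b) (hbr : b < r) :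
    ∃ z ∈ planeGroup o v s a b, o.areaForm v z ≠ 0 ∧ ‖z‖ₑ < r := by
  rcases eq_or_ne b 0 with rfl | hb₀
  · obtain rfl := nonpos_iff_eq_zero.1 h.le
    obtain ⟨p, hp, hpr⟩ := ENNReal.lt_iff_exists_nnreal_btwn.1 hbr
    refine ⟨(p : ℝ) • o.rightAngleRotation v, by simp [planeGroup_zero_zero], ?_, ?_⟩
    · simpa [h.norm_eq, pos_iff_ne_zero] using hp
    · simpa [enorm_smul, ← ofReal_norm (o.rightAngleRotation v), h.norm_eq] using hpr
  have hb : b ≠ ⊤ := hbr.ne_top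
  refine ⟨_, second_mem_planeGroup h.norm_eq hb, ?_, ?_⟩
  · rw [areaForm_smul_add_smul_rightAngleRotation o h.norm_eq]
    exact ENNReal.toReal_ne_zero.2 ⟨height_ne_zero h.abs_le h.le hb₀, height_ne_top hb⟩
  · rwa [← ofReal_norm, ← abs_norm, (sq_eq_sq_iff_abs_eq_abs _ b.toReal).1, ENNReal.abs_toReal,
      ENNReal.ofReal_toReal hb]
    rw [norm_sq_eq_inner_sq_add_areaForm_sq o h.norm_eq,
      inner_smul_add_smul_rightAngleRotation o h.norm_eq,
      areaForm_smul_add_smul_rightAngleRotation o h.norm_eq, toReal_height_sq h.abs_le h.le hb]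
    ring

lemma IsReducedParam.firstMin_planeGroup (h : IsReducedParam v s a b) :
    firstMin (planeGroup o v s a b) = a := by
  refine le_antisymm (le_of_forall_gt fun r hr => firstMin_lt_iff.2 ?_)
    (le_firstMin_iff.2 fun z hz hz₀ => h.le_enorm hz hz₀)
  obtain ⟨p, hp, hmem, hpr⟩ := exists_smul_mem_planeGroup (o := o) (b := b) (s := s) h.norm_eq hr
  exact ⟨p • v, hmem, smul_ne_zero hp (norm_ne_zero_iff.1 (by simp [h.norm_eq])), hpr⟩

lemma IsReducedParam.secondMin_planeGroup (h : IsReducedParam v s a b) :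
    secondMin o (planeGroup o v s a b) = b := by
  refine le_antisymm (le_of_forall_gt fun r hr => secondMin_lt_iff.2 ?_)
    (le_secondMin_iff.2 fun z hz z' hz' hzz' => ?_)
  · obtain ⟨p, hp, hmem, hpr⟩ := exists_smul_mem_planeGroup (o := o) (b := b) (s := s) h.norm_eq
      (h.le.trans_lt hr)
    obtain ⟨z, hz, hω, hzr⟩ := h.exists_areaForm_ne_zero (o := o) hr
    exact ⟨p • v, hmem, z, hz, by simp [hp, hω], max_lt hpr hzr⟩
  · by_contra! hlt
    rw [max_lt_iff] at hlt
    have hline : ∀ y ∈ planeGroup o v s a b, ‖y‖ₑ < b → ⟪v, y⟫ • v = y := fun y hy hyb => by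
      have hω := not_imp_comm.1 (h.le_enorm_of_areaForm_ne_zero hy) hyb.not_ge
      simpa [hω] using inner_smul_add_areaForm_smul o h.norm_eq y
    rw [← hline z hz hlt.1, ← hline z' hz' hlt.2] at hzz'
    simp at hzz'

end PlaneGroup

section Fibres

variable {o} {v v' : E} {s s' : ℝ} {a a' b b' : ℝ≥0∞}

lemma IsReducedParam.eq_or_eq_neg_of_planeGroup_eq (h : IsReducedParam v s a b)
    (h' : IsReducedParam v' s' a b) (hab : a < b)
    (heq : planeGroup o v s a b = planeGroup o v' s' a b) : v' = v ∨ v' = -v := by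
  obtain ⟨p, hp, hmem, hpb⟩ := exists_smul_mem_planeGroup (o := o) (b := b) (s := s') h'.norm_eq hab
  have hω := not_imp_comm.1 (h.le_enorm_of_areaForm_ne_zero (heq ▸ hmem)) hpb.not_ge
  exact eq_or_eq_neg_of_areaForm_eq_zero o h.norm_eq h'.norm_eq (by simpa [hp] using hω)

lemma IsReducedParam.exists_intCast_add_eq (h : IsReducedParam v s a b)
    (h' : IsReducedParam v s' a b) (ha : a ≠ 0) (hb : b ≠ ⊤)
    (heq : planeGroup o v s a b = planeGroup o v s' a b) : ∃ m : ℤ, s' = m + s := by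
  have hb₀ : b ≠ 0 := (ha.bot_lt.trans_le h.le).ne'
  obtain ⟨n, m, hn, hm⟩ := heq ▸ second_mem_planeGroup (o := o) (s := s') (a := a) h.norm_eq hb
  rw [areaForm_smul_add_smul_rightAngleRotation o h.norm_eq,
    isMultiple_iff (height_ne_zero h.abs_le h.le hb₀) (height_ne_top hb)] at hn
  rw [inner_smul_add_smul_rightAngleRotation o h.norm_eq,
    isMultiple_iff ha (ne_top_of_le_ne_top hb h.le)] at hm
  have hpos : 0 < (height s a b).toReal :=
    ENNReal.toReal_pos (height_ne_zero h.abs_le h.le hb₀) (height_ne_top hb)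
  have hpos' : 0 < (height s' a b).toReal :=
    ENNReal.toReal_pos (height_ne_zero h'.abs_le h'.le hb₀) (height_ne_top hb)
  have hn_pos : 0 < n := by
    exact_mod_cast pos_of_mul_pos_left (hn ▸ hpos') hpos.le
  -- Both heights lie between `√3 / 2 * b` and `b`, so one cannot be twice the other.
  have hn_lt : n < 2 := by
    by_contra! hn₂
    have hn₂' : 2 * (height s a b).toReal ≤ (height s' a b).toReal := by
      rw [hn]; gcongr; exact_mod_cast hn₂
    have hlow := three_mul_sq_le_sq_two_mul_height h.abs_le h.le hb
    have hsq : (2 * (height s a b).toReal) ^ 2 ≤ (height s' a b).toReal ^ 2 := by gcongr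
    rw [toReal_height_sq h'.abs_le h'.le hb] at hsq
    nlinarith [sq_nonneg (s' * a.toReal), ENNReal.toReal_pos hb₀ hb]
  obtain rfl : n = 1 := by lia
  refine ⟨m, mul_right_cancel₀ (ENNReal.toReal_pos ha (ne_top_of_le_ne_top hb h.le)).ne' ?_⟩
  linear_combination hm

lemma IsReducedParam.planeGroup_eq_iff (h : IsReducedParam v s a b) (h' : IsReducedParam v' s' a b)
    (hab : a < b) : planeGroup o v s a b = planeGroup o v' s' a b ↔
      (v' = v ∨ v' = -v) ∧ (a = 0 ∨ b = ⊤ ∨ ∃ m : ℤ, s' = m + s) := by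
  have hneg (hv : v' = v ∨ v' = -v) : planeGroup o v' s' a b = planeGroup o v s' a b := by
    rcases hv with rfl | rfl
    exacts [rfl, planeGroup_neg v s' a b]
  constructor
  · intro heq
    have hv := h.eq_or_eq_neg_of_planeGroup_eq h' hab heq
    rw [hneg hv] at heq
    refine ⟨hv, or_iff_not_imp_left.2 fun ha => or_iff_not_imp_left.2 fun hb => ?_⟩
    exact h.exists_intCast_add_eq ⟨h.norm_eq, h'.abs_le, h.le⟩ ha hb heq
  · rintro ⟨hv, hs⟩
    rw [hneg hv]
    rcases hs with rfl | rfl | ⟨m, rfl⟩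
    · exact planeGroup_zero_left v s s' b
    · exact planeGroup_top_right v s s' a
    · exact (planeGroup_add_intCast h.abs_le m h'.abs_le).symm

lemma planeGroup_eq_iff_of_lt (hv : ‖v‖ = 1) (hv' : ‖v'‖ = 1) (hs : |s| ≤ 1 / 2)
    (hs' : |s'| ≤ 1 / 2) (hab : a < b) (hab' : a' < b')
    (h : a = 0 ∨ b = ⊤ ↔ a' = 0 ∨ b' = ⊤) :
    planeGroup o v s a b = planeGroup o v' s' a b ↔
      planeGroup o v s a' b' = planeGroup o v' s' a' b' := by
  rw [IsReducedParam.planeGroup_eq_iff ⟨hv, hs, hab.le⟩ ⟨hv', hs', hab.le⟩ hab,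
    IsReducedParam.planeGroup_eq_iff ⟨hv, hs, hab'.le⟩ ⟨hv', hs', hab'.le⟩ hab',
    ← or_assoc, ← or_assoc, h]

lemma planeGroup_mul_eq_iff {r : ℝ≥0} (hr : r ≠ 0) :
    planeGroup o v s (r * a) (r * b) = planeGroup o v' s' (r * a) (r * b) ↔
      planeGroup o v s a b = planeGroup o v' s' a b := by
  rw [planeGroup_smul hr, planeGroup_smul hr,
    (MulAction.injective₀ (NNReal.coe_ne_zero.2 hr)).eq_iff]

end Fibres

section Continuity

variable {X : Type*} [TopologicalSpace X] {v : X → E} {s : X → ℝ} {a b : X → ℝ≥0∞}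
  (hv : Continuous v) (hs : Continuous s) (ha : Continuous a) (hb : Continuous b)
  (h : ∀ x, IsReducedParam (v x) (s x) (a x) (b x))
include hv hs ha hb h

lemma isClosed_setOf_mem_planeGroup :
    IsClosed {q : X × E | q.2 ∈ planeGroup o (v q.1) (s q.1) (a q.1) (b q.1)} := by
  refine isClosed_iff_forall_filter.2 ?_
  rintro ⟨x₀, z₀⟩ F hF hmem hlim
  have hev : ∀ᶠ q : X × E in F, ∃ n m : ℤ,
      IsMultiple (height (s q.1) (a q.1) (b q.1)) n (o.areaForm (v q.1) q.2) ∧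
        IsMultiple (a q.1) m (⟪v q.1, q.2⟫ - n * (s q.1 * (a q.1).toReal)) :=
    le_principal_iff.1 hmem
  obtain ⟨N, hN⟩ := hev.choice
  obtain ⟨M, hNM⟩ := hN.choice
  have hx : Tendsto Prod.fst F (𝓝 x₀) := (continuous_fst.tendsto (x₀, z₀)).mono_left hlim
  have hz : Tendsto Prod.snd F (𝓝 z₀) := (continuous_snd.tendsto (x₀, z₀)).mono_left hlim
  have hvF := (hv.tendsto x₀).comp hx
  have harea : Tendsto (fun q : X × E => o.areaForm (v q.1) q.2) F (𝓝 (o.areaForm (v x₀) z₀)) := by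
    simp only [← o.inner_rightAngleRotation_left]
    exact ((o.rightAngleRotation.continuous.tendsto _).comp hvF).inner hz
  have hheight := continuous_height hs ha hb (fun x => (h x).abs_le) fun x => (h x).le
  obtain ⟨n, hn, hNn⟩ := IsMultiple.exists_of_tendsto ((hheight.tendsto x₀).comp hx)
    harea (hNM.mono fun _ => And.left)
  rcases eq_or_ne (a x₀) 0 with ha₀ | ha₀
  · exact ⟨n, 0, hn, ha₀ ▸ isMultiple_zero_left⟩
  have hh₀ := height_ne_zero (h x₀).abs_le (h x₀).le (ha₀.bot_lt.trans_le (h x₀).le).ne'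
  have haF := (ha.tendsto x₀).comp hx
  have hoffset := ((hs.tendsto x₀).comp hx).mul
    (tendsto_mul_toReal (eq_zero_of_isMultiple_height (h x₀).le hn) haF)
  obtain ⟨m, hm, -⟩ := IsMultiple.exists_of_tendsto (N := M) haF ((hvF.inner hz).sub hoffset) (by
    filter_upwards [hNM, hNn hh₀] with q hq hqn
    simpa [hqn, mul_left_comm] using hq.2)
  exact ⟨n, m, hn, by simpa [mul_left_comm] using hm⟩

lemma exists_tendsto_mem_planeGroup {x₀ : X} {z₀ : E}
    (hz₀ : z₀ ∈ planeGroup o (v x₀) (s x₀) (a x₀) (b x₀)) :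
    ∃ z : X → E, Tendsto z (𝓝 x₀) (𝓝 z₀) ∧
      ∀ᶠ x in 𝓝 x₀, z x ∈ planeGroup o (v x) (s x) (a x) (b x) := by
  obtain ⟨n, m, hn, hm⟩ := hz₀
  have hheight := continuous_height hs ha hb (fun x => (h x).abs_le) fun x => (h x).le
  obtain ⟨N, Q, hQ, hNQ, hN⟩ := IsMultiple.exists_tendsto (D := 0) (d := 0) (hheight.tendsto x₀)
    (fun _ => tendsto_const_nhds) (by simpa using hn)
  have hoffset : a x₀ ≠ 0 →
      Tendsto (fun x => N x * (s x * (a x).toReal)) (𝓝 x₀) (𝓝 (n * (s x₀ * (a x₀).toReal))) := by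
    intro ha₀
    have hh₀ := height_ne_zero (h x₀).abs_le (h x₀).le (ha₀.bot_lt.trans_le (h x₀).le).ne'
    simpa [hN hh₀, mul_left_comm] using (hs.tendsto x₀).mul
      (tendsto_mul_toReal (eq_zero_of_isMultiple_height (h x₀).le hn) (ha.tendsto x₀))
  obtain ⟨M, P, hP, hMP, -⟩ := IsMultiple.exists_tendsto (ha.tendsto x₀) hoffset hm
  refine ⟨fun x => P x • v x + Q x • o.rightAngleRotation (v x), ?_, ?_⟩
  · have hlim := (hP.smul (hv.tendsto x₀)).add
      (hQ.smul ((o.rightAngleRotation.continuous.comp hv).tendsto x₀))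
    rwa [Function.comp_apply, inner_smul_add_areaForm_smul o (h x₀).norm_eq] at hlim
  · filter_upwards [hNQ, hMP] with x hxQ hxP
    exact smul_add_smul_mem_planeGroup (h x).norm_eq (by simpa using hxQ) hxP

end Continuity

lemma IsReducedParam.isClosed_planeGroup {v : E} {s : ℝ} {a b : ℝ≥0∞} (h : IsReducedParam v s a b) :
    IsClosed (planeGroup o v s a b : Set E) :=
  (isClosed_setOf_mem_planeGroup o (X := Unit) (v := fun _ => v) (s := fun _ => s) (a := fun _ => a)
    (b := fun _ => b) continuous_const continuous_const continuous_const continuous_const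
    fun _ => h).preimage (Continuous.prodMk_right ())

section Existence

variable {o} {v w z : E} {ℓ : ℝ} {Γ : AddSubgroup E}

lemma exists_planeGroup_eq_of_areaForm_eq_zero (hΓ : IsClosed (Γ : Set E)) (hv : ‖v‖ = 1)
    (h : ∀ z ∈ Γ, o.areaForm v z = 0) : ∃ a, planeGroup o v 0 a ⊤ = Γ := by
  obtain ⟨a, ha⟩ := exists_forall_mem_iff_isMultiple
    (H := Γ.comap (LinearMap.toSpanSingleton ℝ E v).toAddMonoidHom)
    (hΓ.preimage (continuous_id.smul continuous_const))
  refine ⟨a, ?_⟩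
  have hmem (p : ℝ) : p • v ∈ Γ ↔ ∃ n, IsMultiple a n p := ha p
  ext z
  have hz := inner_smul_add_areaForm_smul o hv z
  constructor
  · rintro ⟨n, m, hn, hm⟩
    rw [height_top, isMultiple_top_iff] at hn
    rw [hn.2, zero_smul, add_zero] at hz
    exact hz ▸ (hmem _).2 ⟨m, by simpa using hm⟩
  · intro hzΓ
    rw [h z hzΓ, zero_smul, add_zero] at hz
    obtain ⟨m, hm⟩ := (hmem ⟪v, z⟫).1 (hz.symm ▸ hzΓ)
    exact ⟨0, m, by simp [h z hzΓ, isMultiple_zero], by simpa using hm⟩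

lemma exists_planeGroup_eq_of_forall_smul_mem (hΓ : IsClosed (Γ : Set E)) (hv : ‖v‖ = 1)
    (h : ∀ r : ℝ, r • v ∈ Γ) : ∃ b, planeGroup o v 0 0 b = Γ := by
  obtain ⟨b, hb⟩ := exists_forall_mem_iff_isMultiple
    (H := Γ.comap (LinearMap.toSpanSingleton ℝ E (o.rightAngleRotation v)).toAddMonoidHom)
    (hΓ.preimage (continuous_id.smul continuous_const))
  refine ⟨b, ?_⟩
  have hmem (q : ℝ) : q • o.rightAngleRotation v ∈ Γ ↔ ∃ n, IsMultiple b n q := hb q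
  ext z
  rw [← inner_smul_add_areaForm_smul o hv z, Γ.add_mem_cancel_left (h _), hmem,
    inner_smul_add_areaForm_smul o hv z]
  simp [mem_planeGroup, isMultiple_zero_left]

lemma mem_planeGroup_iff_exists_zsmul (hv : ‖v‖ = 1) (hℓ : 0 < ℓ) (hw : 0 < o.areaForm v w) :
    z ∈ planeGroup o v (⟪v, w⟫ / ℓ) (ENNReal.ofReal ℓ) ‖w‖ₑ ↔
      ∃ n m : ℤ, z = n • w + m • (ℓ • v) := by
  have hheight : height (⟪v, w⟫ / ℓ) (ENNReal.ofReal ℓ) ‖w‖ₑ = ENNReal.ofReal (o.areaForm v w) := by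
    rw [height_of_ne_top enorm_ne_top, ENNReal.toReal_ofReal hℓ.le, div_mul_cancel₀ _ hℓ.ne',
      toReal_enorm, norm_sq_eq_inner_sq_add_areaForm_sq o hv w, add_sub_cancel_left,
      Real.sqrt_sq hw.le]
  rw [mem_planeGroup, hheight, ENNReal.toReal_ofReal hℓ.le, div_mul_cancel₀ _ hℓ.ne']
  refine exists_congr fun n => exists_congr fun m => ?_
  rw [isMultiple_iff (by simpa using hw) ENNReal.ofReal_ne_top, ENNReal.toReal_ofReal hw.le,
    isMultiple_iff (by simpa using hℓ) ENNReal.ofReal_ne_top, ENNReal.toReal_ofReal hℓ.le,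
    sub_eq_iff_eq_add']
  simp only [← Int.cast_smul_eq_zsmul ℝ]
  constructor
  · rintro ⟨hω, hi⟩
    refine eq_of_inner_eq_of_areaForm_eq o hv ?_ ?_
    · simp [inner_add_right, real_inner_smul_right, hv, hi]
    · simp [hω]
  · rintro rfl
    simp [inner_add_right, real_inner_smul_right, hv]

lemma isReducedParam_of_minimal (hv : ‖v‖ = 1) (hℓ : 0 < ℓ) (hu : ℓ • v ∈ Γ) (hw : w ∈ Γ)
    (hℓ_min : ∀ z ∈ Γ, z ≠ 0 → ℓ ≤ ‖z‖) (hvw : 0 < o.areaForm v w)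
    (hw_min : ∀ z ∈ Γ, o.areaForm v z ≠ 0 → ‖w‖ ≤ ‖z‖) :
    IsReducedParam v (⟪v, w⟫ / ℓ) (ENNReal.ofReal ℓ) ‖w‖ₑ where
  norm_eq := hv
  abs_le := by
    have hle (z : E) (hz : z ∈ Γ) (hω : o.areaForm v z = o.areaForm v w) :
        ⟪v, w⟫ ^ 2 ≤ ⟪v, z⟫ ^ 2 := by
      have h := pow_le_pow_left₀ (norm_nonneg w) (hw_min z hz (hω ▸ hvw.ne')) 2
      rw [norm_sq_eq_inner_sq_add_areaForm_sq o hv, norm_sq_eq_inner_sq_add_areaForm_sq o hv z,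
        hω] at h
      exact le_of_add_le_add_right h
    have hadd := hle _ (Γ.add_mem hw hu) (by simp)
    have hsub := hle _ (Γ.sub_mem hw hu) (by simp)
    simp only [inner_add_right, inner_sub_right, real_inner_smul_right,
      real_inner_self_eq_norm_sq, hv] at hadd hsub
    rw [abs_div, abs_of_pos hℓ, div_le_iff₀ hℓ, abs_le]
    constructor <;> nlinarith
  le := by
    rw [← ofReal_norm]
    exact ENNReal.ofReal_le_ofReal (hℓ_min w hw (by rintro rfl; simp at hvw))

lemma planeGroup_eq_of_minimal (hv : ‖v‖ = 1) (hℓ : 0 < ℓ) (hu : ℓ • v ∈ Γ) (hw : w ∈ Γ)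
    (hℓ_min : ∀ z ∈ Γ, z ≠ 0 → ℓ ≤ ‖z‖) (hvw : 0 < o.areaForm v w)
    (hw_min : ∀ z ∈ Γ, o.areaForm v z ≠ 0 → ‖w‖ ≤ ‖z‖) :
    planeGroup o v (⟪v, w⟫ / ℓ) (ENNReal.ofReal ℓ) ‖w‖ₑ = Γ := by
  ext z
  rw [mem_planeGroup_iff_exists_zsmul hv hℓ hvw]
  constructor
  · rintro ⟨n, m, rfl⟩
    exact Γ.add_mem (Γ.zsmul_mem hw n) (Γ.zsmul_mem hu m)
  intro hz
  obtain ⟨n, hn⟩ := exists_int_abs_sub_mul_le hvw (o.areaForm v z)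
  obtain ⟨m, hm⟩ := exists_int_abs_sub_mul_le hℓ (⟪v, z⟫ - n * ⟪v, w⟫)
  -- Subtracting the closest multiples of the generators leaves a vector too short to be nonzero.
  set y := z - (n • w + m • (ℓ • v)) with hy_def
  have hy : y ∈ Γ := Γ.sub_mem hz (Γ.add_mem (Γ.zsmul_mem hw n) (Γ.zsmul_mem hu m))
  have hyω : |o.areaForm v y| ≤ o.areaForm v w / 2 := by
    simpa [hy_def, ← Int.cast_smul_eq_zsmul ℝ] using hn
  have hyi : |⟪v, y⟫| ≤ ℓ / 2 := by
    simpa [hy_def, ← Int.cast_smul_eq_zsmul ℝ, inner_sub_right, inner_add_right,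
      real_inner_smul_right, hv, sub_sub] using hm
  refine ⟨n, m, sub_eq_zero.1 (by_contra fun hy₀ : y ≠ 0 => ?_)⟩
  have hℓy := hℓ_min y hy hy₀
  have hynorm := norm_sq_eq_inner_sq_add_areaForm_sq o hv y
  rw [← sq_abs ⟪v, y⟫, ← sq_abs (o.areaForm v y)] at hynorm
  by_cases hω : o.areaForm v y = 0
  · rw [hω, abs_zero] at hynorm
    nlinarith [abs_nonneg ⟪v, y⟫]
  · have hwy := hw_min y hy hω
    have hwnorm := norm_sq_eq_inner_sq_add_areaForm_sq o hv w
    nlinarith [abs_nonneg ⟪v, y⟫, abs_nonneg (o.areaForm v y), sq_nonneg ⟪v, w⟫, norm_nonneg w]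

theorem exists_isReducedParam_planeGroup_eq (hΓ : IsClosed (Γ : Set E)) :
    ∃ v s a b, IsReducedParam v s a b ∧ planeGroup o v s a b = Γ := by
  have : FiniteDimensional ℝ E := .of_fact_finrank_eq_two
  by_cases hdisc : firstMin Γ = 0
  · obtain ⟨v, hv, hline⟩ := exists_norm_eq_one_forall_smul_mem hΓ hdisc
    obtain ⟨b, hb⟩ := exists_planeGroup_eq_of_forall_smul_mem (o := o) hΓ hv hline
    exact ⟨v, 0, 0, b, ⟨hv, by simp, zero_le⟩, hb⟩
  rw [← ne_eq, ← discreteTopology_iff_firstMin_ne_zero] at hdisc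
  have hrank_le_one {v : E} (hv : ‖v‖ = 1) (h : ∀ z ∈ Γ, o.areaForm v z = 0) :
      ∃ v s a b, IsReducedParam v s a b ∧ planeGroup o v s a b = Γ := by
    obtain ⟨a, ha⟩ := exists_planeGroup_eq_of_areaForm_eq_zero hΓ hv h
    exact ⟨v, 0, a, ⊤, ⟨hv, by simp, le_top⟩, ha⟩
  by_cases hbot : ∃ z ∈ Γ, z ≠ 0
  · obtain ⟨u, hu, hu₀, hu_min⟩ := exists_mem_forall_norm_le Γ hbot
    have hv : ‖‖u‖⁻¹ • u‖ = 1 := norm_smul_inv_norm hu₀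
    have hℓ : ‖u‖ • ‖u‖⁻¹ • u = u := smul_inv_smul₀ (norm_ne_zero_iff.2 hu₀) u
    set v := ‖u‖⁻¹ • u
    by_cases hspan : ∃ z ∈ Γ, o.areaForm v z ≠ 0
    · obtain ⟨w, hw, hw₀, hw_min⟩ := exists_mem_forall_norm_le Γ hspan
      obtain ⟨w', hw', hw'_norm, hvw'⟩ : ∃ w' ∈ Γ, ‖w'‖ = ‖w‖ ∧ 0 < o.areaForm v w' := by
        rcases hw₀.lt_or_gt with h | h
        exacts [⟨-w, Γ.neg_mem hw, norm_neg w, by simpa using h⟩, ⟨w, hw, rfl, h⟩]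
      have hu' : ‖u‖ • v ∈ Γ := hℓ.symm ▸ hu
      rw [← hw'_norm] at hw_min
      exact ⟨v, _, _, _,
        isReducedParam_of_minimal hv (norm_pos_iff.2 hu₀) hu' hw' hu_min hvw' hw_min,
        planeGroup_eq_of_minimal hv (norm_pos_iff.2 hu₀) hu' hw' hu_min hvw' hw_min⟩
    · exact hrank_le_one hv (by simpa using hspan)
  · push Not at hbot
    have : Nontrivial E :=
      nontrivial_of_finrank_pos (R := ℝ) (by simp [Fact.out (p := finrank ℝ E = 2)])
    obtain ⟨v, hv⟩ := exists_norm_eq E zero_le_one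
    exact hrank_le_one hv fun z hz => by simp [hbot z hz]

end Existence

end Plane

/-! ### The Chabauty space -/

section Chabauty

variable {n : ℕ}

lemma disjoint_nhds_of_not_le {Γ Γ' : ChabautyPoint n} (h : ¬ Γ.1 ≤ Γ'.1) :
    Disjoint (𝓝 Γ) (𝓝 Γ') := by
  obtain ⟨z, hz, hz'⟩ := SetLike.not_le_iff_exists.1 h
  obtain ⟨ε, hε, hball⟩ := Metric.nhds_basis_closedBall.mem_iff.1 (Γ'.2.isOpen_compl.mem_nhds hz')
  have hmeet : {Δ : ChabautyPoint n | ((Δ.1 : Set (Euc n)) ∩ Metric.ball z ε).Nonempty} ∈ 𝓝 Γ :=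
    (TopologicalSpace.isOpen_generateFrom_of_mem (.inr ⟨_, Metric.isOpen_ball, rfl⟩)).mem_nhds
      ⟨z, hz, Metric.mem_ball_self hε⟩
  have hmiss : {Δ : ChabautyPoint n | (Δ.1 : Set (Euc n)) ∩ Metric.closedBall z ε = ∅} ∈ 𝓝 Γ' :=
    (TopologicalSpace.isOpen_generateFrom_of_mem
      (.inl ⟨_, isCompact_closedBall z ε, rfl⟩)).mem_nhds
      (disjoint_iff_inter_eq_empty.1 (disjoint_left.2 fun _ hy hyz => hball hyz hy))
  refine Filter.disjoint_iff.2 ⟨_, hmeet, _, hmiss, disjoint_left.2 ?_⟩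
  rintro Δ ⟨y, hy, hyz⟩ hΔ
  exact (hΔ.subset ⟨hy, Metric.ball_subset_closedBall hyz⟩ : y ∈ (∅ : Set (Euc n)))

instance : T2Space (ChabautyPoint n) := by
  refine t2Space_iff_disjoint_nhds.2 fun Γ Γ' hne => ?_
  by_cases h : Γ.1 ≤ Γ'.1
  · exact (disjoint_nhds_of_not_le fun h' => hne (Subtype.ext (h.antisymm h'))).symm
  · exact disjoint_nhds_of_not_le h

lemma continuous_chabautyPoint {X : Type*} [TopologicalSpace X] {F : X → ChabautyPoint n}
    (hclosed : IsClosed {q : X × Euc n | q.2 ∈ (F q.1).1})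
    (hlift : ∀ x₀, ∀ z₀ ∈ (F x₀).1, ∃ z : X → Euc n,
      Tendsto z (𝓝 x₀) (𝓝 z₀) ∧ ∀ᶠ x in 𝓝 x₀, z x ∈ (F x).1) : Continuous F := by
  refine continuous_generateFrom_iff.2 ?_
  rintro _ (⟨K, hK, rfl⟩ | ⟨U, hU, rfl⟩)
  · have : CompactSpace K := isCompact_iff_compactSpace.1 hK
    have hproj : IsClosed (Prod.snd '' {q : K × X | (q.1 : Euc n) ∈ (F q.2).1}) :=
      isClosedMap_snd_of_compactSpace _ (hclosed.preimage
        (continuous_snd.prodMk (continuous_subtype_val.comp continuous_fst)))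
    convert hproj.isOpen_compl using 1
    ext x
    simp [Set.eq_empty_iff_forall_notMem, imp_not_comm]
  · refine isOpen_iff_eventually.2 ?_
    rintro x₀ ⟨z₀, hz₀, hz₀U⟩
    obtain ⟨z, hz, hzF⟩ := hlift x₀ z₀ hz₀
    filter_upwards [hz.eventually (hU.mem_nhds hz₀U), hzF] with x hxU hxF
    exact ⟨z x, hxF, hxU⟩

end Chabauty

section PlanePoint

instance fact_finrank_euc_two : Fact (finrank ℝ (Euc 2) = 2) := ⟨by simp⟩

variable (o : Orientation ℝ (Euc 2) (Fin 2)) {v : Euc 2} {s : ℝ} {a b : ℝ≥0∞}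

/-- The subgroup `planeGroup` with reduced parameters, as a point of the Chabauty space. -/
def planePoint (h : IsReducedParam v s a b) : ChabautyPoint 2 :=
  ⟨planeGroup o v s a b, h.isClosed_planeGroup o⟩

variable {o}

lemma planePoint_eq_iff {v' : Euc 2} {s' : ℝ} {a' b' : ℝ≥0∞} {h : IsReducedParam v s a b}
    {h' : IsReducedParam v' s' a' b'} :
    planePoint o h = planePoint o h' ↔ planeGroup o v s a b = planeGroup o v' s' a' b' :=
  Subtype.ext_iff

lemma firstMin_planePoint (h : IsReducedParam v s a b) : firstMin (planePoint o h).1 = a :=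
  h.firstMin_planeGroup

lemma secondMin_planePoint (h : IsReducedParam v s a b) : secondMin o (planePoint o h).1 = b :=
  h.secondMin_planeGroup

lemma lengths_eq_of_planePoint_eq {v' : Euc 2} {s' : ℝ} {a' b' : ℝ≥0∞}
    {h : IsReducedParam v s a b} {h' : IsReducedParam v' s' a' b'}
    (heq : planePoint o h = planePoint o h') : a = a' ∧ b = b' := by
  refine ⟨?_, ?_⟩
  · rw [← firstMin_planePoint (o := o) h, heq, firstMin_planePoint]
  · rw [← secondMin_planePoint (o := o) h, heq, secondMin_planePoint]

lemma exists_planePoint_eq (Γ : ChabautyPoint 2) :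
    ∃ v s a b, ∃ h : IsReducedParam v s a b, planePoint o h = Γ := by
  obtain ⟨v, s, a, b, h, hΓ⟩ := exists_isReducedParam_planeGroup_eq (o := o) Γ.2
  exact ⟨v, s, a, b, h, Subtype.ext hΓ⟩

lemma continuous_planePoint {X : Type*} [TopologicalSpace X] {v : X → Euc 2} {s : X → ℝ}
    {a b : X → ℝ≥0∞} (hv : Continuous v) (hs : Continuous s) (ha : Continuous a)
    (hb : Continuous b) (h : ∀ x, IsReducedParam (v x) (s x) (a x) (b x)) :
    Continuous fun x => planePoint o (h x) :=
  continuous_chabautyPoint (isClosed_setOf_mem_planeGroup o hv hs ha hb h)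
    fun _ _ hz₀ => exists_tendsto_mem_planeGroup o hv hs ha hb h hz₀

lemma planePoint_mem_normOne_iff (h : IsReducedParam v s a b) :
    planePoint o h ∈ normOne ↔ a = 1 :=
  firstMin_eq_one_iff.symm.trans (by rw [firstMin_planePoint])

lemma span_planePoint_eq_top_iff (h : IsReducedParam v s a b) :
    Submodule.span ℝ ((planePoint o h).1 : Set (Euc 2)) = ⊤ ↔ b ≠ ⊤ := by
  rw [span_eq_top_iff_secondMin_ne_top (o := o), secondMin_planePoint]

lemma planePoint_mem_latticeSet_iff (h : IsReducedParam v s a b) :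
    planePoint o h ∈ latticeSet ↔ a ≠ 0 ∧ b ≠ ⊤ :=
  and_congr (by rw [discreteTopology_iff_firstMin_ne_zero, firstMin_planePoint])
    (span_planePoint_eq_top_iff h)

end PlanePoint

/-! ### The suspension -/

section Suspension

variable {X : Type*}

lemma equivalence_suspRel : Equivalence (suspRel X) where
  refl _ := .inl rfl
  symm h := h.imp Eq.symm (Or.imp And.symm And.symm)
  trans {x y z} h h' := by
    rcases h with rfl | h | h
    · exact h'
    all_goals rcases h' with rfl | h' | h' <;> grind [suspRel]

variable [TopologicalSpace X]

/-- The quotient map onto the suspension. -/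
def suspMk (x : X × I) : Susp X := Quot.mk _ x

lemma isQuotientMap_suspMk : IsQuotientMap (suspMk : X × I → Susp X) := isQuotientMap_quot_mk

lemma suspMk_eq_iff {x y : X × I} :
    suspMk x = suspMk y ↔ suspRel X x y :=
  equivalence_suspRel.quot_mk_eq_iff x y

lemma suspMk_mem_suspSet_iff {A : Set X} (hA : A.Nonempty) {x : X} {t : I} :
    suspMk (x, t) ∈ suspSet A ↔ x ∈ A ∨ t = 0 ∨ t = 1 := by
  constructor
  · rintro ⟨y, hy, u, h⟩
    rcases suspMk_eq_iff.1 h with h | h | h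
    · obtain rfl : x = y := congrArg Prod.fst h
      exact .inl hy
    · exact .inr (.inl (Icc.coe_eq_zero.1 h.1))
    · exact .inr (.inr (Icc.coe_eq_one.1 h.1))
  · obtain ⟨y, hy⟩ := hA
    rintro (hx | rfl | rfl)
    · exact ⟨x, hx, t, rfl⟩
    · exact ⟨y, hy, 0, Quot.sound (.inr (.inl ⟨rfl, rfl⟩))⟩
    · exact ⟨y, hy, 1, Quot.sound (.inr (.inr ⟨rfl, rfl⟩))⟩

end Suspension

lemma exists_homeomorph_of_isQuotientMap {X Y Z : Type*} [TopologicalSpace X] [TopologicalSpace Y]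
    [TopologicalSpace Z] {f : X → Y} {g : X → Z} (hf : IsQuotientMap f) (hg : IsQuotientMap g)
    (h : ∀ x x', f x = f x' ↔ g x = g x') : ∃ Φ : Y ≃ₜ Z, ∀ x, Φ (f x) = g x := by
  let F : C(X, Y) := ⟨f, hf.continuous⟩
  let G : C(X, Z) := ⟨g, hg.continuous⟩
  have hF : IsQuotientMap F := hf
  have hG : IsQuotientMap G := hg
  refine ⟨hF.homeomorph.symm.trans
    ((Homeomorph.Quotient.congr (.refl X) h).trans hG.homeomorph), fun x => ?_⟩
  have hx : hF.homeomorph.symm (f x) = Quotient.mk _ x := hF.homeomorph.symm_apply_eq.2 rfl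
  simp only [Homeomorph.trans_apply, hx]
  rfl

section Lengths

variable (c t : I)

/-- Half the difference of the two lengths at height `t` of the suspension: the fraction `c` of
the largest value that keeps both lengths in `[0, 1]`. -/
def lengthRadius : ℝ := c * min (t : ℝ) (1 - t)

lemma min_one_sub_nonneg : 0 ≤ min (t : ℝ) (1 - t) := le_min t.2.1 (unitInterval.one_minus_nonneg t)

lemma lengthRadius_nonneg : 0 ≤ lengthRadius c t := mul_nonneg c.2.1 (min_one_sub_nonneg t)

lemma lengthRadius_le : lengthRadius c t ≤ min (t : ℝ) (1 - t) :=
  mul_le_of_le_one_left (min_one_sub_nonneg t) c.2.2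

/-- The first successive minimum at height `t` of the suspension, in a coordinate identifying
`[0, ∞]` with `[0, 1]`. -/
def lowLength : I := ⟨t - lengthRadius c t, by
  grind [lengthRadius_nonneg c t, lengthRadius_le c t]⟩

/-- The second successive minimum at height `t` of the suspension, in a coordinate identifying
`[0, ∞]` with `[0, 1]`. -/
def highLength : I := ⟨t + lengthRadius c t, by
  grind [lengthRadius_nonneg c t, lengthRadius_le c t]⟩

lemma lowLength_le_highLength : lowLength c t ≤ highLength c t :=
  Subtype.coe_le_coe.1 (by simp only [lowLength, highLength]; linarith [lengthRadius_nonneg c t])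

lemma continuous_lengthRadius : Continuous fun p : I × I => lengthRadius p.1 p.2 := by
  unfold lengthRadius
  fun_prop

lemma continuous_lowLength : Continuous fun p : I × I => lowLength p.1 p.2 :=
  ((continuous_subtype_val.comp continuous_snd).sub continuous_lengthRadius).subtype_mk _

lemma continuous_highLength : Continuous fun p : I × I => highLength p.1 p.2 :=
  ((continuous_subtype_val.comp continuous_snd).add continuous_lengthRadius).subtype_mk _

variable {c t} {c' t' : I}

lemma min_one_sub_eq_zero_iff : min (t : ℝ) (1 - t) = 0 ↔ t = 0 ∨ t = 1 := by
  rw [← Icc.coe_eq_zero, ← Icc.coe_eq_one]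
  grind

lemma lengthRadius_eq_zero_iff : lengthRadius c t = 0 ↔ c = 0 ∨ t = 0 ∨ t = 1 := by
  rw [lengthRadius, mul_eq_zero, min_one_sub_eq_zero_iff, Icc.coe_eq_zero]

lemma lengthRadius_eq_min_iff :
    lengthRadius c t = min (t : ℝ) (1 - t) ↔ c = 1 ∨ t = 0 ∨ t = 1 := by
  rw [lengthRadius, mul_left_eq_self₀, min_one_sub_eq_zero_iff, Icc.coe_eq_one]

lemma lowLength_lt_highLength_iff : lowLength c t < highLength c t ↔ ¬(c = 0 ∨ t = 0 ∨ t = 1) := by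
  rw [← lengthRadius_eq_zero_iff, ← Subtype.coe_lt_coe, lowLength, highLength]
  grind [lengthRadius_nonneg c t]

lemma lowLength_eq_zero_or_highLength_eq_one_iff :
    lowLength c t = 0 ∨ highLength c t = 1 ↔ c = 1 ∨ t = 0 ∨ t = 1 := by
  rw [← lengthRadius_eq_min_iff, ← Icc.coe_eq_zero, ← Icc.coe_eq_one, lowLength, highLength]
  grind [lengthRadius_le c t]

lemma lengths_eq_of_lengthRadius_eq_zero (h : lengthRadius c t = 0) :
    lowLength c t = t ∧ highLength c t = t := by
  simp [lowLength, highLength, h]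

lemma eq_of_lengths_eq (hlow : lowLength c t = lowLength c' t')
    (hhigh : highLength c t = highLength c' t') : t = t' ∧ (c = c' ∨ t = 0 ∨ t = 1) := by
  simp only [lowLength, highLength, Subtype.mk.injEq] at hlow hhigh
  obtain rfl : t = t' := Subtype.ext (by linarith)
  have hradius : lengthRadius c t = lengthRadius c' t := by linarith
  rw [lengthRadius, lengthRadius, mul_eq_mul_right_iff, min_one_sub_eq_zero_iff,
    Subtype.coe_inj] at hradius
  exact ⟨rfl, hradius⟩

lemma exists_lengths_eq {x y : I} (h : x ≤ y) :
    ∃ c t, lowLength c t = x ∧ highLength c t = y := by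
  have hxy : (x : ℝ) ≤ y := h
  let t : I := ⟨(x + y) / 2, by grind⟩
  have hle : ((y : ℝ) - x) / 2 ≤ min (t : ℝ) (1 - t) := by grind
  let c : I := ⟨(y - x) / 2 / min (t : ℝ) (1 - t),
    div_nonneg (by linarith) (min_one_sub_nonneg t), div_le_one_of_le₀ hle (min_one_sub_nonneg t)⟩
  have hradius : lengthRadius c t = (y - x) / 2 :=
    div_mul_cancel_of_imp fun h₀ => le_antisymm (h₀ ▸ hle) (by linarith)
  refine ⟨c, t, Subtype.ext ?_, Subtype.ext ?_⟩
  · simp only [lowLength, hradius, t]; ring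
  · simp only [highLength, hradius, t]; ring

end Lengths

section Parametrization

/-- A coordinate in `[0, 1]` for the lengths in `[0, ∞]`. -/
def lengthEquiv : I ≃o ℝ≥0∞ := ENNReal.orderIsoUnitIntervalBirational.symm

lemma lengthEquiv_eq_zero_iff {c : I} : lengthEquiv c = 0 ↔ c = 0 := map_eq_bot_iff lengthEquiv

lemma lengthEquiv_eq_top_iff {c : I} : lengthEquiv c = ⊤ ↔ c = 1 := map_eq_top_iff lengthEquiv

/-- Parameters for the closed subgroups with shortest vector of norm one: the direction `v` of this
vector, the twist `s` and the excess `c` of the second successive minimum over the first. -/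
abbrev ShapeParam : Type := Metric.sphere (0 : Euc 2) 1 × Icc (-(1 / 2) : ℝ) (1 / 2) × I

lemma ShapeParam.isReducedParam (p : ShapeParam) {a b : ℝ≥0∞} (hab : a ≤ b) :
    IsReducedParam (p.1 : Euc 2) p.2.1 a b :=
  ⟨norm_eq_of_mem_sphere p.1, abs_le.2 p.2.1.2, hab⟩

variable (o : Orientation ℝ (Euc 2) (Fin 2))

/-- The group with shortest vector of norm one given by its parameters. -/
def shapeGroup (p : ShapeParam) : normOne :=
  ⟨planePoint o (p.isReducedParam (le_self_add (b := lengthEquiv p.2.2))),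
    (planePoint_mem_normOne_iff _).2 rfl⟩

/-- The group at height `q.2` on the segment of the suspension through `shapeGroup o q.1`. -/
def suspensionGroup (q : ShapeParam × I) : ChabautyPoint 2 :=
  planePoint o (q.1.isReducedParam
    (lengthEquiv.monotone (lowLength_le_highLength q.1.2.2 q.2)))

lemma continuous_shapeGroup : Continuous (shapeGroup o) :=
  (continuous_planePoint (by fun_prop) (by fun_prop) continuous_const
    (continuous_const.add (lengthEquiv.continuous.comp (by fun_prop))) _).subtype_mk _

lemma continuous_suspensionGroup : Continuous (suspensionGroup o) :=
  have hc : Continuous fun q : ShapeParam × I => (q.1.2.2, q.2) := by fun_prop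
  continuous_planePoint (by fun_prop) (by fun_prop)
    (lengthEquiv.continuous.comp (continuous_lowLength.comp hc))
    (lengthEquiv.continuous.comp (continuous_highLength.comp hc)) _

lemma surjective_shapeGroup : Function.Surjective (shapeGroup o) := by
  rintro ⟨Γ, hΓ⟩
  obtain ⟨v, s, a, b, h, rfl⟩ := exists_planePoint_eq (o := o) Γ
  obtain rfl := (planePoint_mem_normOne_iff h).1 hΓ
  obtain ⟨x, rfl⟩ := exists_add_of_le h.le
  obtain ⟨c, rfl⟩ := lengthEquiv.surjective x
  exact ⟨(⟨v, by simp [h.norm_eq]⟩, ⟨s, abs_le.1 h.abs_le⟩, c), rfl⟩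

lemma surjective_suspensionGroup : Function.Surjective (suspensionGroup o) := by
  intro Γ
  obtain ⟨v, s, a, b, h, rfl⟩ := exists_planePoint_eq (o := o) Γ
  obtain ⟨x, rfl⟩ := lengthEquiv.surjective a
  obtain ⟨y, rfl⟩ := lengthEquiv.surjective b
  obtain ⟨c, t, rfl, rfl⟩ := exists_lengths_eq (lengthEquiv.le_iff_le.1 h.le)
  exact ⟨((⟨v, by simp [h.norm_eq]⟩, ⟨s, abs_le.1 h.abs_le⟩, c), t), rfl⟩

variable {o} {p p' : ShapeParam} {t t' : I}

lemma shapeGroup_mem_rankOneNormOne_iff : shapeGroup o p ∈ rankOneNormOne ↔ p.2.2 = 1 := by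
  rw [rankOneNormOne, mem_ofPred_eq, shapeGroup, Ne, span_planePoint_eq_top_iff, not_not,
    ENNReal.add_eq_top, or_iff_right ENNReal.one_ne_top, lengthEquiv_eq_top_iff]

lemma suspensionGroup_mem_latticeSet_iff :
    suspensionGroup o (p, t) ∈ latticeSet ↔ ¬(p.2.2 = 1 ∨ t = 0 ∨ t = 1) := by
  rw [← lowLength_eq_zero_or_highLength_eq_one_iff, suspensionGroup,
    planePoint_mem_latticeSet_iff, Ne, Ne, lengthEquiv_eq_zero_iff, lengthEquiv_eq_top_iff, not_or]

lemma nonempty_rankOneNormOne : rankOneNormOne.Nonempty :=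
  have ⟨v, hv⟩ := (NormedSpace.sphere_nonempty (x := (0 : Euc 2))).2 zero_le_one
  ⟨shapeGroup (EuclideanSpace.basisFun (Fin 2) ℝ).toBasis.orientation
    (⟨v, hv⟩, ⟨0, by norm_num⟩, 1), shapeGroup_mem_rankOneNormOne_iff.2 rfl⟩

lemma suspensionGroup_eq_of_eq_zero (ht : t = 0) : (suspensionGroup o (p, t)).1 = ⊤ := by
  obtain ⟨hlow, hhigh⟩ :=
    lengths_eq_of_lengthRadius_eq_zero (lengthRadius_eq_zero_iff (c := p.2.2).2 (.inr (.inl ht)))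
  simp only [suspensionGroup, planePoint, hlow, hhigh, lengthEquiv_eq_zero_iff.2 ht,
    planeGroup_zero_zero]

lemma suspensionGroup_eq_of_eq_one (ht : t = 1) : (suspensionGroup o (p, t)).1 = ⊥ := by
  obtain ⟨hlow, hhigh⟩ :=
    lengths_eq_of_lengthRadius_eq_zero (lengthRadius_eq_zero_iff (c := p.2.2).2 (.inr (.inr ht)))
  simp only [suspensionGroup, planePoint, hlow, hhigh, lengthEquiv_eq_top_iff.2 ht,
    planeGroup_top_top (norm_eq_of_mem_sphere p.1)]

lemma suspensionGroup_eq_iff_shapeGroup_eq (hc : p.2.2 = p'.2.2) (ht₀ : t ≠ 0) (ht₁ : t ≠ 1) :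
    suspensionGroup o (p, t) = suspensionGroup o (p', t) ↔ shapeGroup o p = shapeGroup o p' := by
  obtain ⟨v, s, c⟩ := p
  obtain ⟨v', s', c'⟩ := p'
  obtain rfl : c = c' := hc
  rw [suspensionGroup, suspensionGroup, shapeGroup, shapeGroup, Subtype.mk.injEq,
    planePoint_eq_iff, planePoint_eq_iff]
  have hrad : lengthRadius c t = 0 ↔ c = 0 := by simp [lengthRadius_eq_zero_iff, ht₀, ht₁]
  by_cases hc₀ : c = 0
  · obtain ⟨hlow, hhigh⟩ := lengths_eq_of_lengthRadius_eq_zero (hrad.2 hc₀)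
    simp only [hlow, hhigh, lengthEquiv_eq_zero_iff.2 hc₀, add_zero]
    lift lengthEquiv t to ℝ≥0 using lengthEquiv_eq_top_iff.not.2 ht₁ with r hr
    have hr₀ : r ≠ 0 := ENNReal.coe_ne_zero.1 (hr ▸ lengthEquiv_eq_zero_iff.not.2 ht₀)
    simpa only [mul_one] using planeGroup_mul_eq_iff (a := 1) (b := 1) hr₀
  · refine planeGroup_eq_iff_of_lt (norm_eq_of_mem_sphere v) (norm_eq_of_mem_sphere v')
      (abs_le.2 s.2) (abs_le.2 s'.2) ?_ ?_ ?_
    · exact lengthEquiv.lt_iff_lt.2 (lowLength_lt_highLength_iff.2 (by simp [hc₀, ht₀, ht₁]))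
    · exact ENNReal.lt_add_right ENNReal.one_ne_top (lengthEquiv_eq_zero_iff.not.2 hc₀)
    · rw [lengthEquiv_eq_zero_iff, lengthEquiv_eq_top_iff,
        lowLength_eq_zero_or_highLength_eq_one_iff, ENNReal.add_eq_top, lengthEquiv_eq_top_iff]
      simp [ht₀, ht₁]

lemma eq_of_suspensionGroup_eq (h : suspensionGroup o (p, t) = suspensionGroup o (p', t')) :
    t = t' ∧ (p.2.2 = p'.2.2 ∨ t = 0 ∨ t = 1) :=
  have ⟨hlow, hhigh⟩ := lengths_eq_of_planePoint_eq h
  eq_of_lengths_eq (lengthEquiv.injective hlow) (lengthEquiv.injective hhigh)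

lemma eq_of_shapeGroup_eq (h : shapeGroup o p = shapeGroup o p') : p.2.2 = p'.2.2 :=
  lengthEquiv.injective ((ENNReal.add_right_inj ENNReal.one_ne_top).1
    (lengths_eq_of_planePoint_eq (Subtype.mk.inj h)).2)

lemma suspensionGroup_eq_iff_suspRel :
    suspensionGroup o (p, t) = suspensionGroup o (p', t') ↔
      suspRel normOne (shapeGroup o p, t) (shapeGroup o p', t') := by
  constructor
  · intro h
    obtain ⟨rfl, hc⟩ := eq_of_suspensionGroup_eq h
    by_cases ht₀ : t = 0
    · exact .inr (.inl ⟨Icc.coe_eq_zero.2 ht₀, Icc.coe_eq_zero.2 ht₀⟩)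
    by_cases ht₁ : t = 1
    · exact .inr (.inr ⟨Icc.coe_eq_one.2 ht₁, Icc.coe_eq_one.2 ht₁⟩)
    have hc' : p.2.2 = p'.2.2 := hc.resolve_right (not_or.2 ⟨ht₀, ht₁⟩)
    exact .inl (Prod.ext ((suspensionGroup_eq_iff_shapeGroup_eq hc' ht₀ ht₁).1 h) rfl)
  · have pole {t t' : I} {Δ : AddSubgroup (Euc 2)} (h : (suspensionGroup o (p, t)).1 = Δ)
        (h' : (suspensionGroup o (p', t')).1 = Δ) :
        suspensionGroup o (p, t) = suspensionGroup o (p', t') := Subtype.ext (h.trans h'.symm)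
    have hzero (ht : t = 0) (ht' : t' = 0) :=
      pole (suspensionGroup_eq_of_eq_zero ht) (suspensionGroup_eq_of_eq_zero ht')
    have hone (ht : t = 1) (ht' : t' = 1) :=
      pole (suspensionGroup_eq_of_eq_one ht) (suspensionGroup_eq_of_eq_one ht')
    rintro (h | ⟨ht, ht'⟩ | ⟨ht, ht'⟩)
    · obtain ⟨hshape, rfl⟩ := Prod.ext_iff.1 h
      by_cases ht₀ : t = 0
      · exact hzero ht₀ ht₀
      by_cases ht₁ : t = 1
      · exact hone ht₁ ht₁
      exact (suspensionGroup_eq_iff_shapeGroup_eq (eq_of_shapeGroup_eq hshape) ht₀ ht₁).2 hshape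
    · exact hzero (Icc.coe_eq_zero.1 ht) (Icc.coe_eq_zero.1 ht')
    · exact hone (Icc.coe_eq_one.1 ht) (Icc.coe_eq_one.1 ht')

variable (o)

lemma isQuotientMap_suspensionGroup : IsQuotientMap (suspensionGroup o) :=
  (continuous_suspensionGroup o).isClosedMap.isQuotientMap (continuous_suspensionGroup o)
    (surjective_suspensionGroup o)

lemma isQuotientMap_suspMk_shapeGroup :
    IsQuotientMap fun q : ShapeParam × I => suspMk (shapeGroup o q.1, q.2) :=
  have hcont : Continuous (Prod.map (shapeGroup o) (id : I → I)) :=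
    (continuous_shapeGroup o).prodMap continuous_id
  isQuotientMap_suspMk.comp
    (hcont.isClosedMap.isQuotientMap hcont
      ((surjective_shapeGroup o).prodMap Function.surjective_id))

end Parametrization

/-- The pair (𝒞(ℝ²), 𝒞(ℝ²) \ ℒ) is homeomorphic to the suspension of the pair (𝒞¹, 𝒵¹). -/
theorem chabauty_plane_suspension :
    ∃ Φ : ChabautyPoint 2 ≃ₜ Susp normOne, Φ '' latticeSetᶜ = suspSet rankOneNormOne := by
  let o := (EuclideanSpace.basisFun (Fin 2) ℝ).toBasis.orientation
  obtain ⟨Φ, hΦ⟩ : ∃ Φ : ChabautyPoint 2 ≃ₜ Susp normOne,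
      ∀ q, Φ (suspensionGroup o q) = suspMk (shapeGroup o q.1, q.2) :=
    exists_homeomorph_of_isQuotientMap (isQuotientMap_suspensionGroup o)
      (isQuotientMap_suspMk_shapeGroup o) fun _ _ => suspensionGroup_eq_iff_suspRel.trans
        suspMk_eq_iff.symm
  refine ⟨Φ, (eq_preimage_iff_image_eq Φ.bijective).1 ?_⟩
  ext Γ
  obtain ⟨⟨p, t⟩, rfl⟩ := surjective_suspensionGroup o Γ
  rw [mem_compl_iff, suspensionGroup_mem_latticeSet_iff, not_not, mem_preimage, hΦ,
    suspMk_mem_suspSet_iff nonempty_rankOneNormOne, shapeGroup_mem_rankOneNormOne_iff]
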